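/- arXiv:1805.02213 — 3 statements merged into one kernel-verified Lean document; each statement's English description precedes it below -/
import Mathlib

section
/- Let σ be an irreducible incommensurable multiscale substitution scheme in ℝ^d, let {π_m} be a Kakutani sequence of partitions of a prototile T_i ∈ τ_σ, and let 1 ≤ r ≤ n. Then, with q_h denoting the common entry in column h of the matrix Q_σ (all rows of Q_σ being equal and positive), the Lebesgue measure of the union of the tiles of type r in π_m converges, as m → ∞, to vol T_i · Σ_{h=1}^n q_h · Σ_{k=1}^{k_hr} (β_hr^(k))^d · log(1/β_hr^(k)). -/
/-!
Choose a piece of a tile with probability its relative volume. The type and the logarithmic scale of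
the chosen tile then perform a Markov renewal walk with waiting times `log (1 / β)`. Let `F j t` be
the probability that the walk from `j` is at type `r` once its waiting times have used up the time
`t`; it is the indicator of `j = r` for `t ≤ 0`. The renewal equation for `F` says that, for times
measured by the scale of a tile `S`, the sum of `vol S * F` over a partition does not change under
substitution of tiles at positive time. Measuring the scale relative to the largest tile of `π_m`,
the sum over `π_m` is the volume covered by type `r` and the sum over `π_0` is `vol T_i * F i t`
with `t` tending to infinity, so the theorem asks for the limit of `F`.

Bounded uniformly continuous solutions of the renewal equation converge: near its asymptotic maximum
a solution is nearly maximal along all paths of the walk, and by incommensurability the lengths of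
paths are eventually dense. Since `F` jumps, this applies only to its primitive, whose increments
over time `h` converge to `h` times a slope given by the stationary measure of the walk. A barrier,
with increments of order `h ^ 2` in the limit, bounds the difference between these increments and
`h * F`, and `h → 0` gives the limit of `F`. The stationary measure is a row of `adj (1 - M)`, where
all rows agree because the rows of the irreducible stochastic matrix `M` sum to one.
-/

open MeasureTheory Filter Topology
open scoped Pointwise

noncomputable section

/-- Euclidean space `ℝ^d`. -/
abbrev Euc (d : ℕ) : Type := EuclideanSpace ℝ (Fin d)

/-- A tile in `ℝ^d`: a bounded Lebesgue measurable set of positive measure whose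
boundary has measure zero. -/
def IsTile {d : ℕ} (T : Set (Euc d)) : Prop :=
  Bornology.IsBounded T ∧ NullMeasurableSet T volume ∧ 0 < volume T ∧
    volume (frontier T) = 0

/-- A multiscale substitution scheme in `ℝ^d` on `n` prototiles `T 1, …, T n`,
with `numSub i j` substitution tiles of type `j` in `ω(T i)`, scaling constants
`scale i j k`, constants of substitution
`β_ij^(k) = (vol T_j / vol T_i)^(1/d) · α_ij^(k) ∈ (0,1)`, and a nonempty family
of substitution rules, each rule assigning to every prototile `T i` a partition of
`T i` into sets isometric to the substitution tiles `scale i j k • T j`. -/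
structure MSScheme (d n : ℕ) where
  T : Fin n → Set (Euc d)
  tile : ∀ i, IsTile (T i)
  numSub : Fin n → Fin n → ℕ
  scale : (i j : Fin n) → Fin (numSub i j) → ℝ
  scale_pos : ∀ i j k, 0 < scale i j k
  beta_pos : ∀ i j k,
    0 < ((volume (T j)).toReal / (volume (T i)).toReal) ^ (1 / (d : ℝ)) * scale i j k
  beta_lt_one : ∀ i j k,
    ((volume (T j)).toReal / (volume (T i)).toReal) ^ (1 / (d : ℝ)) * scale i j k < 1
  rules : Set ((i j : Fin n) → Fin (numSub i j) → Set (Euc d))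
  rules_nonempty : rules.Nonempty
  rules_iso : ∀ ϱ ∈ rules, ∀ i j k, ∃ φ : Euc d ≃ᵢ Euc d,
    ϱ i j k = φ '' (scale i j k • T j)
  rules_disjoint : ∀ ϱ ∈ rules, ∀ i : Fin n, ∀ p q : Σ j : Fin n, Fin (numSub i j),
    p ≠ q → Disjoint (interior (ϱ i p.1 p.2)) (interior (ϱ i q.1 q.2))
  rules_cover : ∀ ϱ ∈ rules, ∀ i : Fin n,
    (⋃ p : Σ j : Fin n, Fin (numSub i j), ϱ i p.1 p.2) = T i

/-- The constants of substitution `β_ij^(k) = (vol T_j / vol T_i)^(1/d) · α_ij^(k)`. -/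
def MSScheme.beta {d n : ℕ} (σ : MSScheme d n) (i j : Fin n)
    (k : Fin (σ.numSub i j)) : ℝ :=
  ((volume (σ.T j)).toReal / (volume (σ.T i)).toReal) ^ (1 / (d : ℝ)) * σ.scale i j k

/-- A labeled tile: a subset of `ℝ^d` together with a type label. -/
structure LTile (d n : ℕ) where
  carrier : Set (Euc d)
  type : Fin n

noncomputable instance {d n : ℕ} : DecidableEq (LTile d n) := Classical.decEq _

/-- `SubstitutesTo σ S P` : the labeled tile `S`, a rescaled isometric copy
`φ (a • T_{type S})` of the prototile of its type, is partitioned by the collection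
`P` obtained by applying some substitution rule of the scheme,
`ϱ(a·φ(T_i)) = a·φ(ϱ(T_i))`, with the types of the pieces given by the scheme. -/
def SubstitutesTo {d n : ℕ} (σ : MSScheme d n) (S : LTile d n)
    (P : Finset (LTile d n)) : Prop :=
  ∃ ϱ ∈ σ.rules, ∃ a : ℝ, 0 < a ∧ ∃ φ : Euc d ≃ᵢ Euc d,
    S.carrier = φ '' (a • σ.T S.type) ∧
    P = Finset.image
      (fun p : Σ j : Fin n, Fin (σ.numSub S.type j) =>
        (⟨φ '' (a • ϱ S.type p.1 p.2), p.1⟩ : LTile d n)) Finset.univ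

open Classical in
/-- The tiles of maximal volume in a partition. -/
def maxTiles {d n : ℕ} (P : Finset (LTile d n)) : Finset (LTile d n) :=
  P.filter fun S => ∀ S' ∈ P, volume S'.carrier ≤ volume S.carrier

/-- A Kakutani sequence of partitions of the prototile `T i`: start with the trivial
partition, and at each step substitute exactly the tiles of maximal volume, each
according to an arbitrarily and independently chosen substitution rule. -/
def IsKakutaniSeq {d n : ℕ} (σ : MSScheme d n) (i : Fin n)
    (π : ℕ → Finset (LTile d n)) : Prop :=
  π 0 = {(⟨σ.T i, i⟩ : LTile d n)} ∧
  ∀ m, ∃ repl : LTile d n → Finset (LTile d n),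
    (∀ S ∈ maxTiles (π m), SubstitutesTo σ S (repl S)) ∧
    π (m + 1) = (π m \ maxTiles (π m)) ∪ (maxTiles (π m)).biUnion repl

/-- A generation sequence of partitions of the prototile `T i`: start with the trivial
partition, and at each step substitute all tiles, each according to an arbitrarily
and independently chosen substitution rule. -/
def IsGenSeq {d n : ℕ} (σ : MSScheme d n) (i : Fin n)
    (δ : ℕ → Finset (LTile d n)) : Prop :=
  δ 0 = {(⟨σ.T i, i⟩ : LTile d n)} ∧
  ∀ m, ∃ repl : LTile d n → Finset (LTile d n),
    (∀ S ∈ δ m, SubstitutesTo σ S (repl S)) ∧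
    δ (m + 1) = (δ m).biUnion repl

/-- A marking sequence of a sequence of partitions of `U`: finite sets of (distinct)
points of `U` such that every tile of the `m`-th partition contains exactly one point
of `x m`. -/
def IsMarking {d n : ℕ} (U : Set (Euc d)) (γ : ℕ → Finset (LTile d n))
    (x : ℕ → Finset (Euc d)) : Prop :=
  ∀ m, (↑(x m) : Set (Euc d)) ⊆ U ∧
    ∀ S ∈ γ m, ∃! p, p ∈ x m ∧ p ∈ S.carrier

/-- An `r`-marking sequence: finite sets of (distinct) points of `U` such that every
tile of type `r` of the `m`-th partition contains exactly one point of `x m`, and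
every point of `x m` lies in a tile of type `r`. -/
def IsRMarking {d n : ℕ} (U : Set (Euc d)) (γ : ℕ → Finset (LTile d n))
    (r : Fin n) (x : ℕ → Finset (Euc d)) : Prop :=
  ∀ m, (↑(x m) : Set (Euc d)) ⊆ U ∧
    (∀ S ∈ γ m, S.type = r → ∃! p, p ∈ x m ∧ p ∈ S.carrier) ∧
    ∀ p ∈ x m, ∃ S ∈ γ m, S.type = r ∧ p ∈ S.carrier

/-- A sequence of finite sets of points is uniformly distributed in `U` if the
normalized sampling averages of every continuous function converge to its
normalized Lebesgue integral over `U`. -/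
def MarkingUD {d : ℕ} (U : Set (Euc d)) (x : ℕ → Finset (Euc d)) : Prop :=
  ∀ f : Euc d → ℝ, ContinuousOn f U →
    Tendsto (fun m => (∑ p ∈ x m, f p) / ((x m).card : ℝ)) atTop
      (𝓝 ((∫ t in U, f t) / (volume U).toReal))

/-- Irreducibility: every type `j` is produced from every prototile `T i` by some
finite (positive) number of substitutions. -/
def MSScheme.Irreducible {d n : ℕ} (σ : MSScheme d n) : Prop :=
  ∀ i j : Fin n, Relation.TransGen (fun a b => 0 < σ.numSub a b) i j

/-- `σ.IsClosedPathLogVol i a` : some tile of type `i` produced from `T i` by finitely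
many substitutions has `log (vol T' / vol T_i) = a`; equivalently, `a` is the sum of
`log ((β_ij^(k))^d)` along some closed path from `i` to `i` in the associated graph. -/
def MSScheme.IsClosedPathLogVol {d n : ℕ} (σ : MSScheme d n)
    (i : Fin n) (a : ℝ) : Prop :=
  ∃ m : ℕ, 0 < m ∧ ∃ p : Fin (m + 1) → Fin n, p 0 = i ∧ p (Fin.last m) = i ∧
    ∃ e : (t : Fin m) → Fin (σ.numSub (p t.castSucc) (p t.succ)),
      a = ∑ t : Fin m, Real.log (σ.beta (p t.castSucc) (p t.succ) (e t) ^ d)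

/-- Incommensurability: there are tiles `T'` of type `i` produced from `T i` and `T''`
of type `j` produced from `T j` with `log (vol T' / vol T_i)` not a rational multiple
of `log (vol T'' / vol T_j)`. -/
def MSScheme.Incommensurable {d n : ℕ} (σ : MSScheme d n) : Prop :=
  ∃ (i j : Fin n) (a b : ℝ), σ.IsClosedPathLogVol i a ∧ σ.IsClosedPathLogVol j b ∧
    ∀ q : ℚ, a ≠ (q : ℝ) * b

/-- The matrix `(M_σ)_ij = Σ_k (β_ij^(k))^d`. -/
def Mmat {d n : ℕ} (σ : MSScheme d n) : Matrix (Fin n) (Fin n) ℝ :=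
  Matrix.of fun i j => ∑ k : Fin (σ.numSub i j), σ.beta i j k ^ d

/-- The matrix `(M'_σ)_ij = Σ_k (β_ij^(k))^d · log β_ij^(k)`. -/
def M'mat {d n : ℕ} (σ : MSScheme d n) : Matrix (Fin n) (Fin n) ℝ :=
  Matrix.of fun i j => ∑ k : Fin (σ.numSub i j), σ.beta i j k ^ d * Real.log (σ.beta i j k)

/-- `Q_σ = adj (I − M_σ) / (− tr (adj (I − M_σ) · M'_σ))`. -/
def Qmat {d n : ℕ} (σ : MSScheme d n) : Matrix (Fin n) (Fin n) ℝ :=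
  (-(Matrix.trace ((1 - Mmat σ).adjugate * M'mat σ)))⁻¹ • (1 - Mmat σ).adjugate

/-- The number of tiles of type `r` in a partition. -/
def countType {d n : ℕ} (P : Finset (LTile d n)) (r : Fin n) : ℕ :=
  (P.filter fun S => S.type = r).card

/-- The union of the tiles of type `r` in a partition. -/
def typeUnion {d n : ℕ} (P : Finset (LTile d n)) (r : Fin n) : Set (Euc d) :=
  ⋃ S ∈ P.filter (fun S => S.type = r), S.carrier

/-- A fixed scale scheme: all scaling constants equal the contraction constant `α`. -/
def MSScheme.FixedScale {d n : ℕ} (σ : MSScheme d n) (α : ℝ) : Prop :=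
  α ∈ Set.Ioo (0 : ℝ) 1 ∧ ∀ i j k, σ.scale i j k = α

/-- The substitution matrix `S_ij = k_ij` (as a real matrix). -/
def Smat {d n : ℕ} (σ : MSScheme d n) : Matrix (Fin n) (Fin n) ℝ :=
  Matrix.of fun i j => (σ.numSub i j : ℝ)

/-- A primitive scheme: some power of the substitution matrix is entrywise positive. -/
def MSScheme.Primitive {d n : ℕ} (σ : MSScheme d n) : Prop :=
  ∃ k : ℕ, ∀ i j, 0 < (Smat σ ^ k) i j

end

/-! ### Numerical semigroups with two generators -/

theorem exists_natCast_mul_le_lt {z x : ℝ} (hz : 0 < z) (hx : 0 ≤ x) :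
    ∃ k : ℕ, k * z ≤ x ∧ x < k * z + z := by
  refine ⟨⌊x / z⌋₊, ?_, ?_⟩
  · exact (le_div_iff₀ hz).1 (Nat.floor_le (by positivity))
  · have := (div_lt_iff₀ hz).1 (Nat.lt_floor_add_one (x / z))
    linarith

theorem exists_natCast_combination_gap {u v ε : ℝ} (huv : Irrational (u / v)) (hε : 0 < ε) :
    ∃ a b a' b' : ℕ, (a * u + b * v) - (a' * u + b' * v) ∈ Set.Ioo 0 ε := by
  obtain ⟨z, hz, hz_mem⟩ :=
    (dense_addSubgroupClosure_pair_iff.2 huv).exists_mem_open isOpen_Ioo (Set.nonempty_Ioo.2 hε)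
  obtain ⟨m, k, rfl⟩ := AddSubgroup.mem_closure_pair.1 hz
  refine ⟨m.toNat, k.toNat, (-m).toNat, (-k).toNat, ?_⟩
  have hm : ((m.toNat : ℝ) - (-m).toNat) = m := mod_cast m.toNat_sub_toNat_neg
  have hk : ((k.toNat : ℝ) - (-k).toNat) = k := mod_cast k.toNat_sub_toNat_neg
  convert hz_mem using 1
  simp only [zsmul_eq_mul, ← hm, ← hk]
  ring

/-- If two elements `U < V` of the semigroup differ by `z < ε`, then a run of `N` steps of length
`z` from `N * U` to `N * V` bridges the gap between consecutive translates by multiples of `u`. -/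
theorem exists_natCast_combination_near {u v ε : ℝ} (hu : 0 < u)
    (huv : Irrational (u / v)) (hε : 0 < ε) :
    ∃ L, ∀ x ≥ L, ∃ m k : ℕ, |m * u + k * v - x| < ε := by
  obtain ⟨a, b, a', b', hz⟩ := exists_natCast_combination_gap huv hε
  set U : ℝ := a' * u + b' * v with hU
  set z : ℝ := a * u + b * v - U with hz_def
  obtain ⟨N, hN⟩ := exists_nat_ge (u / z)
  rw [div_le_iff₀ hz.1] at hN
  refine ⟨N * U, fun x hx => ?_⟩
  obtain ⟨c, hc, hc'⟩ := exists_natCast_mul_le_lt hu (sub_nonneg.2 hx)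
  obtain ⟨k, hk, hk'⟩ := exists_natCast_mul_le_lt hz.1 (sub_nonneg.2 hc)
  obtain ⟨l, rfl⟩ : ∃ l, N = k + l := by
    refine Nat.exists_eq_add_of_le (Nat.cast_le (α := ℝ).1 ?_)
    exact le_of_mul_le_mul_right (by linarith) hz.1
  refine ⟨c + l * a' + k * a, l * b' + k * b, ?_⟩
  have hy : ((c + l * a' + k * a : ℕ) : ℝ) * u + (l * b' + k * b : ℕ) * v - x
      = c * u + k * z - (x - (k + l : ℕ) * U) := by
    push_cast [hz_def, hU]
    ring
  rw [hy, abs_lt]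
  constructor <;> linarith [hz.2]

/-! ### Markov renewal systems -/

/-- A Markov renewal system on the state space `ι`: from the state `i` an edge `e : E i` is chosen
with probability `prob i e`, and leads to the state `target i e` after the time `wait i e`. -/
structure RenewalSystem (ι : Type*) (E : ι → Type*) [∀ i, Fintype (E i)] where
  target : ∀ i, E i → ι
  prob : ∀ i, E i → ℝ
  wait : ∀ i, E i → ℝ
  prob_pos : ∀ i e, 0 < prob i e
  sum_prob : ∀ i, ∑ e, prob i e = 1
  wait_pos : ∀ i e, 0 < wait i e

namespace RenewalSystem

variable {ι : Type*} {E : ι → Type*} [∀ i, Fintype (E i)] (R : RenewalSystem ι E)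

/-- The expectation of a function of the edge chosen at the state `i`. -/
def mean (i : ι) (f : E i → ℝ) : ℝ :=
  ∑ e, R.prob i e * f e

theorem mean_const (i : ι) (c : ℝ) : R.mean i (fun _ => c) = c := by
  simp only [mean, ← Finset.sum_mul, R.sum_prob, one_mul]

theorem mean_sub (i : ι) (f g : E i → ℝ) :
    R.mean i (fun e => f e - g e) = R.mean i f - R.mean i g := by
  simp only [mean, mul_sub, Finset.sum_sub_distrib]

theorem mean_const_mul (i : ι) (c : ℝ) (f : E i → ℝ) :
    R.mean i (fun e => c * f e) = c * R.mean i f := by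
  simp only [mean, Finset.mul_sum, mul_left_comm]

theorem mean_mono {i : ι} {f g : E i → ℝ} (h : ∀ e, f e ≤ g e) : R.mean i f ≤ R.mean i g :=
  Finset.sum_le_sum fun e _ => mul_le_mul_of_nonneg_left (h e) (R.prob_pos i e).le

theorem abs_mean_le {i : ι} {f g : E i → ℝ} (h : ∀ e, |f e| ≤ g e) :
    |R.mean i f| ≤ R.mean i g :=
  (Finset.abs_sum_le_sum_abs _ _).trans <| Finset.sum_le_sum fun e _ => by
    rw [abs_mul, abs_of_pos (R.prob_pos i e)]
    exact mul_le_mul_of_nonneg_left (h e) (R.prob_pos i e).le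

theorem mean_mem {s : Set ℝ} (hs : Convex ℝ s) {i : ι} {f : E i → ℝ} (h : ∀ e, f e ∈ s) :
    R.mean i f ∈ s :=
  hs.sum_mem (fun e _ => (R.prob_pos i e).le) (R.sum_prob i) fun e _ => h e

/-- The expectation of `G` after one transition, when the time left at the state `i` is `t`. -/
def step (G : ι → ℝ → ℝ) (i : ι) (t : ℝ) : ℝ :=
  R.mean i fun e => G (R.target i e) (t - R.wait i e)

/-- `G` solves the homogeneous renewal equation at all times after `t₀`. -/
def SolvesAfter (t₀ : ℝ) (G : ι → ℝ → ℝ) : Prop :=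
  ∀ t > t₀, ∀ i, G i t = R.step G i t

/-! ### Path lengths -/

/-- `R.Path i j x`: some nonempty path from `i` to `j` takes the time `x`. -/
inductive Path : ι → ι → ℝ → Prop
  | single {i : ι} (e : E i) : Path i (R.target i e) (R.wait i e)
  | cons {i j : ι} {x : ℝ} (e : E i) : Path (R.target i e) j x → Path i j (R.wait i e + x)

variable {R}

theorem Path.trans {i j k : ι} {x y : ℝ} (hij : R.Path i j x) (hjk : R.Path j k y) :
    R.Path i k (x + y) := by
  induction hij with
  | single e => exact .cons e hjk
  | cons e _ ih => exact add_assoc (R.wait _ e) _ _ ▸ .cons e (ih hjk)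

theorem Path.pos {i j : ι} {x : ℝ} (h : R.Path i j x) : 0 < x := by
  induction h with
  | single e => exact R.wait_pos _ e
  | cons e _ ih => exact add_pos (R.wait_pos _ e) ih

theorem Path.natCast_mul_add {i j : ι} {x y : ℝ} (hloop : R.Path i i x) (hij : R.Path i j y)
    (m : ℕ) : R.Path i j (m * x + y) := by
  induction m with
  | zero => simpa using hij
  | succ m ih =>
    have := hloop.trans ih
    rwa [← add_assoc, ← one_add_mul, add_comm 1, ← Nat.cast_succ] at this

variable (R) in
/-- Path lengths between any two states are eventually `ε`-dense, for every `ε`: the nonlattice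
condition under which solutions of the renewal equation converge. -/
def HasDensePathLengths : Prop :=
  ∀ i j : ι, ∀ ε > 0, ∃ L, ∀ x ≥ L, ∃ y, R.Path i j y ∧ |y - x| < ε

theorem hasDensePathLengths_of_irrational (hconn : ∀ i j, ∃ x, R.Path i j x) {i₀ j₀ : ι} {u v : ℝ}
    (hu : R.Path i₀ i₀ u) (hv : R.Path j₀ j₀ v) (huv : Irrational (u / v)) :
    R.HasDensePathLengths := by
  intro i j ε hε
  obtain ⟨a, ha⟩ := hconn i i₀
  obtain ⟨b, hb⟩ := hconn i₀ j₀
  obtain ⟨c, hc⟩ := hconn j₀ j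
  obtain ⟨L, hL⟩ := exists_natCast_combination_near hu.pos huv hε
  refine ⟨L + (a + b + c), fun x hx => ?_⟩
  obtain ⟨m, k, hmk⟩ := hL (x - (a + b + c)) (by linarith)
  refine ⟨a + (m * u + b) + (k * v + c),
    (ha.trans (hu.natCast_mul_add hb m)).trans (hv.natCast_mul_add hc k), ?_⟩
  convert hmk using 2
  ring

/-! ### Bounded waiting times and the maximum principle -/

section Finite

variable [Finite ι]

variable (R) in
theorem exists_wait_le : ∃ S, ∀ i e, R.wait i e ≤ S := by
  obtain ⟨S, hS⟩ := (Set.finite_range fun q : Σ i, E i => R.wait q.1 q.2).bddAbove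
  exact ⟨S, fun i e => hS ⟨⟨i, e⟩, rfl⟩⟩

variable (R) in
theorem exists_le_wait : ∃ δ > 0, ∀ i e, δ ≤ R.wait i e := by
  obtain ⟨D, hD⟩ := (Set.finite_range fun q : Σ i, E i => (R.wait q.1 q.2)⁻¹).bddAbove
  refine ⟨(max D 1)⁻¹, by positivity, fun i e => inv_le_of_inv_le₀ (R.wait_pos i e) ?_⟩
  exact le_max_of_le_left (hD ⟨⟨i, e⟩, rfl⟩)

variable (R) in
/-- Every transition decreases the time by at least some fixed positive amount. -/
theorem descent_induction {P : ℝ → Prop} (t₀ : ℝ) (base : ∀ t ≤ t₀, P t)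
    (step : ∀ t > t₀, (∀ i e, P (t - R.wait i e)) → P t) (t : ℝ) : P t := by
  obtain ⟨δ, hδ, hwait⟩ := R.exists_le_wait
  have key (N : ℕ) : ∀ t ≤ t₀ + N * δ, P t := by
    induction N with
    | zero => simpa using base
    | succ N ih =>
      intro t ht
      rcases le_or_gt t t₀ with h | h
      · exact base t h
      · refine step t h fun i e => ih _ ?_
        push_cast at ht
        linarith [hwait i e]
  obtain ⟨N, hN⟩ := exists_nat_ge ((t - t₀) / δ)
  exact key N t (by linarith [(div_le_iff₀ hδ).1 hN])

/-- Values on a window as long as the largest waiting time control all later values. -/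
theorem SolvesAfter.mem_of_window {G : ι → ℝ → ℝ} {s : Set ℝ} {t₀ S : ℝ} (hG : R.SolvesAfter t₀ G)
    (hs : Convex ℝ s) (hS : ∀ i e, R.wait i e ≤ S)
    (hwindow : ∀ t ∈ Set.Icc (t₀ - S) t₀, ∀ i, G i t ∈ s) {t : ℝ} (ht : t₀ - S ≤ t) (i : ι) :
    G i t ∈ s := by
  suffices ∀ t, t₀ - S ≤ t → ∀ i, G i t ∈ s from this t ht i
  refine R.descent_induction t₀ (fun t ht₀ hS => hwindow t ⟨hS, ht₀⟩) fun t ht₀ ih _ i => ?_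
  rw [hG t ht₀ i]
  exact R.mean_mem hs fun e => ih i e (by linarith [hS i e]) _

end Finite

/-! ### Convergence of bounded uniformly continuous solutions -/

theorem tendsto_sub_const_atTop {l : Filter ℝ} (hl : l ≤ atTop) (x : ℝ) :
    Tendsto (· - x) l atTop :=
  (tendsto_atTop_add_const_right atTop (-x) tendsto_id).mono_left hl

/-- An average can only attain the asymptotic upper bound of its terms if every term does. -/
theorem tendsto_of_tendsto_mean {α : Type*} {l : Filter α} {i : ι} {f : E i → α → ℝ} {M : ℝ}
    (hf : ∀ e, ∀ b > M, ∀ᶠ a in l, f e a < b)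
    (hmean : Tendsto (fun a => R.mean i fun e => f e a) l (𝓝 M)) (e : E i) :
    Tendsto (f e) l (𝓝 M) := by
  refine tendsto_order.2 ⟨fun b hb => ?_, hf e⟩
  set p := R.prob i e
  have hp : 0 < p := R.prob_pos i e
  set η := p * (M - b) / 2 with hη_def
  have hη : 0 < η := by have := sub_pos.2 hb; positivity
  filter_upwards [hmean.eventually_const_lt (sub_lt_self M hη),
    eventually_all.2 fun e => hf e (M + η) (lt_add_of_pos_right M hη)] with a hmean_a hf_a
  have hterm : p * (M + η - f e a) ≤ R.mean i fun e => M + η - f e a :=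
    Finset.single_le_sum (f := fun e => R.prob i e * (M + η - f e a))
      (fun e _ => mul_nonneg (R.prob_pos i e).le (sub_nonneg.2 (hf_a e).le)) (Finset.mem_univ e)
  rw [mean_sub, mean_const] at hterm
  have : p * (M + η - f e a) < p * (M - b) := by linarith
  linarith [lt_of_mul_lt_mul_left this hp.le]

theorem SolvesAfter.tendsto_sub_of_path {G : ι → ℝ → ℝ} {t₀ M : ℝ} (hG : R.SolvesAfter t₀ G)
    (hM : ∀ i, ∀ b > M, ∀ᶠ t in atTop, G i t < b) {i j : ι} {x : ℝ} (hpath : R.Path i j x)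
    {l : Filter ℝ} (hl : l ≤ atTop) (hlim : Tendsto (G i) l (𝓝 M)) :
    Tendsto (fun t => G j (t - x)) l (𝓝 M) := by
  have edge {i : ι} {l : Filter ℝ} (hl : l ≤ atTop) (hlim : Tendsto (G i) l (𝓝 M)) (e : E i) :
      Tendsto (fun t => G (R.target i e) (t - R.wait i e)) l (𝓝 M) := by
    refine tendsto_of_tendsto_mean (R := R)
      (f := fun e t => G (R.target i e) (t - R.wait i e))
      (fun e b hb => tendsto_sub_const_atTop hl _ |>.eventually (hM _ b hb)) ?_ e
    exact hlim.congr' ((eventually_gt_atTop t₀).filter_mono hl |>.mono fun t ht => hG t ht i)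
  induction hpath generalizing l with
  | single e => exact edge hl hlim e
  | cons e _ ih =>
    have := ih (tendsto_sub_const_atTop hl (R.wait _ e)) (tendsto_map'_iff.2 (edge hl hlim e))
    simpa only [Function.comp_def, sub_sub] using tendsto_map'_iff.1 this

/-- Dense path lengths spread closeness to `M` from the times `t` to windows of any length, placed
at a fixed distance before `t`. -/
theorem SolvesAfter.eventually_lt_on_window {G : ι → ℝ → ℝ} {t₀ M : ℝ} (hG : R.SolvesAfter t₀ G)
    (hR : R.HasDensePathLengths) (huc : ∀ i, UniformContinuous (G i))
    (hM : ∀ i, ∀ b > M, ∀ᶠ t in atTop, G i t < b) {i : ι} {l : Filter ℝ} (hl : l ≤ atTop)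
    (hlim : Tendsto (G i) l (𝓝 M)) (S : ℝ) {b : ℝ} (hb : b < M) (j : ι) :
    ∀ᶠ a in atTop, ∀ᶠ t in l, ∀ x ∈ Set.Icc a (a + S), b < G j (t - x) := by
  obtain ⟨δ, hδ, hclose⟩ := Metric.uniformContinuous_iff.1 (huc j) ((M - b) / 2) (by linarith)
  obtain ⟨L, hL⟩ := hR i j (δ / 2) (half_pos hδ)
  filter_upwards [eventually_ge_atTop L] with a ha
  have hlocal : ∀ x ∈ Set.Icc a (a + S), {p : ℝ × ℝ | b < G j (p.1 - p.2)} ∈ l ×ˢ 𝓝 x := by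
    intro x hx
    obtain ⟨y, hpath, hy⟩ := hL x (ha.trans hx.1)
    have hnear : ∀ᶠ x' in 𝓝 x, dist x' x < δ / 2 := Metric.ball_mem_nhds x (half_pos hδ)
    filter_upwards [((hG.tendsto_sub_of_path hM hpath hl hlim).eventually_const_lt
      (show (M + b) / 2 < M by linarith)).prod_mk hnear] with ⟨t, x'⟩ ⟨ht, hx'⟩
    have hdist : dist (t - x') (t - y) < δ := by
      rw [dist_sub_left]
      exact (dist_triangle_right x' y x).trans_lt (by rw [Real.dist_eq y]; linarith)
    have := (abs_lt.1 (Real.dist_eq _ _ ▸ hclose hdist)).1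
    exact show b < G j (t - x') by linarith
  obtain ⟨A, hA, U, hU, hAU⟩ :=
    mem_prod_iff.1 (isCompact_Icc.mem_prod_nhdsSet_of_forall hlocal)
  exact mem_of_superset hA fun t ht x hx =>
    hAU (Set.mk_mem_prod ht (subset_of_mem_nhdsSet hU hx))

section Finite

variable [Finite ι]

theorem SolvesAfter.eventually_gt {G : ι → ℝ → ℝ} {t₀ M : ℝ} (hG : R.SolvesAfter t₀ G)
    (hR : R.HasDensePathLengths) (huc : ∀ i, UniformContinuous (G i))
    (hM : ∀ i, ∀ b > M, ∀ᶠ t in atTop, G i t < b) {i : ι} (hcluster : MapClusterPt M atTop (G i))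
    {b : ℝ} (hb : b < M) : ∀ᶠ t in atTop, ∀ j, b < G j t := by
  obtain ⟨l, hl, hlim⟩ := mapClusterPt_iff_ultrafilter.1 hcluster
  obtain ⟨S, hS⟩ := R.exists_wait_le
  obtain ⟨a, hwindow⟩ := (eventually_all.2
    (hG.eventually_lt_on_window hR huc hM hl hlim S hb)).exists
  obtain ⟨t, ht, ht₀⟩ := ((eventually_all.2 hwindow).and
    (hl (eventually_ge_atTop (t₀ + a)))).exists
  have hlate : R.SolvesAfter (t - a) G := fun u hu => hG u (by linarith)
  filter_upwards [eventually_ge_atTop (t - a - S)] with u hu j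
  refine hlate.mem_of_window (convex_Ioi b) hS (fun v hv k => ?_) hu j
  have := ht k (t - v) ⟨by linarith [hv.2], by linarith [hv.1]⟩
  rwa [sub_sub_cancel] at this

/-- The limit is the largest asymptotic upper bound of the components: it is approached along some
times, hence on long windows, hence forever by the maximum principle. -/
theorem SolvesAfter.exists_tendsto {G : ι → ℝ → ℝ} {t₀ B : ℝ} (hG : R.SolvesAfter t₀ G)
    (hR : R.HasDensePathLengths) (huc : ∀ i, UniformContinuous (G i)) (hB : ∀ i t, |G i t| ≤ B) :
    ∃ M, ∀ i, Tendsto (G i) atTop (𝓝 M) := by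
  cases isEmpty_or_nonempty ι
  · exact ⟨0, isEmptyElim⟩
  obtain ⟨i₀, hi₀⟩ := Finite.exists_max fun i => limsup (G i) atTop
  have hbdd (i : ι) : IsBoundedUnder (· ≤ ·) atTop (G i) :=
    isBoundedUnder_of ⟨B, fun t => (abs_le.1 (hB i t)).2⟩
  have hcobdd (i : ι) : IsCoboundedUnder (· ≤ ·) atTop (G i) :=
    (isBoundedUnder_of (r := (· ≥ ·)) ⟨-B, fun t => (abs_le.1 (hB i t)).1⟩).isCoboundedUnder_le
  have hM (i : ι) : ∀ b > limsup (G i₀) atTop, ∀ᶠ t in atTop, G i t < b := fun b hb =>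
    eventually_lt_of_limsup_lt ((hi₀ i).trans_lt hb) (hbdd i)
  have hcluster := (isGreatest_mapClusterPt_limsup (hcobdd i₀) (hbdd i₀)).1
  exact ⟨_, fun i => tendsto_order.2 ⟨fun b hb =>
    (hG.eventually_gt hR huc hM hcluster hb).mono fun t ht => ht i, hM i⟩⟩

end Finite

/-! ### Solutions with prescribed past -/

theorem step_sub (G H : ι → ℝ → ℝ) (i : ι) (t : ℝ) :
    R.step (fun i t => G i t - H i t) i t = R.step G i t - R.step H i t :=
  R.mean_sub i _ _

theorem sub_step (G : ι → ℝ → ℝ) (i : ι) (t : ℝ) :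
    G i t - R.step G i t = R.mean i fun e => G i t - G (R.target i e) (t - R.wait i e) := by
  rw [mean_sub, mean_const, step]

theorem step_const_mul (c : ℝ) (G : ι → ℝ → ℝ) (i : ι) (t : ℝ) :
    R.step (fun i t => c * G i t) i t = c * R.step G i t :=
  R.mean_const_mul i c _

theorem step_comp_add (G : ι → ℝ → ℝ) (h : ℝ) (i : ι) (t : ℝ) :
    R.step (fun i t => G i (t + h)) i t = R.step G i (t + h) := by
  simp only [step, sub_add_eq_add_sub]

variable (R) in
/-- The defect `Φ - step Φ` of the renewal equation keeps its value at time `0` from then on, so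
that the increments of `Φ` solve the equation. -/
def HasConstDefect (Φ : ι → ℝ → ℝ) : Prop :=
  ∀ t ≥ 0, ∀ i, Φ i t - R.step Φ i t = Φ i 0 - R.step Φ i 0

theorem HasConstDefect.solvesAfter_increment {Φ : ι → ℝ → ℝ} (hΦ : R.HasConstDefect Φ)
    {t₀ h : ℝ} (h₀ : 0 ≤ t₀) (h₁ : 0 ≤ t₀ + h) :
    R.SolvesAfter t₀ fun i t => Φ i (t + h) - Φ i t := by
  intro t ht i
  have hdefect := hΦ t (by linarith) i
  have hdefect' := hΦ (t + h) (by linarith) i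
  rw [step_sub (fun i t => Φ i (t + h)), step_comp_add]
  linarith

variable (R) in
/-- A positive lower bound of the waiting times, for the recursion defining `solution`. -/
noncomputable def minWait [Finite ι] : ℝ :=
  R.exists_le_wait.choose

theorem minWait_pos [Finite ι] : 0 < R.minWait :=
  R.exists_le_wait.choose_spec.1

theorem minWait_le [Finite ι] (i : ι) (e : E i) : R.minWait ≤ R.wait i e :=
  R.exists_le_wait.choose_spec.2 i e

theorem ceil_sub_wait_div_lt [Finite ι] {t : ℝ} (ht : 0 < t) (i : ι) (e : E i) :
    ⌈(t - R.wait i e) / R.minWait⌉₊ < ⌈t / R.minWait⌉₊ := by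
  have hpos : 0 < ⌈t / R.minWait⌉₊ := Nat.ceil_pos.2 (div_pos ht minWait_pos)
  have hle : (t - R.wait i e) / R.minWait ≤ t / R.minWait - 1 := by
    rw [div_sub_one minWait_pos.ne']
    gcongr
    exacts [minWait_pos.le, minWait_le i e]
  have := Nat.ceil_sub_one (t / R.minWait) ▸ Nat.ceil_mono hle
  omega

variable (R) in
/-- The solution with past `f` of the renewal equation `F = step F + k` for positive times. -/
noncomputable def solution [Finite ι] (f : ι → ℝ → ℝ) (k : ι → ℝ) (i : ι) (t : ℝ) : ℝ :=
  if 0 < t then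
    R.mean i (fun e => solution f k (R.target i e) (t - R.wait i e)) + k i
  else f i t
termination_by ⌈t / R.minWait⌉₊
decreasing_by exact ceil_sub_wait_div_lt ‹_› i e

section Finite

variable [Finite ι]

theorem solution_of_nonpos (f : ι → ℝ → ℝ) (k : ι → ℝ) (i : ι) {t : ℝ} (ht : t ≤ 0) :
    R.solution f k i t = f i t := by
  rw [solution, if_neg ht.not_gt]

theorem solution_of_pos (f : ι → ℝ → ℝ) (k : ι → ℝ) (i : ι) {t : ℝ} (ht : 0 < t) :
    R.solution f k i t = R.step (R.solution f k) i t + k i := by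
  rw [solution, if_pos ht, step]

variable (R) in
/-- The function with past `f` whose defect is constant from time `0` on. -/
noncomputable def integrated (f : ι → ℝ → ℝ) : ι → ℝ → ℝ :=
  R.solution f fun i => f i 0 - R.step f i 0

theorem integrated_of_nonpos (f : ι → ℝ → ℝ) (i : ι) {t : ℝ} (ht : t ≤ 0) :
    R.integrated f i t = f i t :=
  solution_of_nonpos f _ i ht

theorem hasConstDefect_integrated (f : ι → ℝ → ℝ) : R.HasConstDefect (R.integrated f) := by
  have hzero (i : ι) : R.integrated f i 0 - R.step (R.integrated f) i 0 = f i 0 - R.step f i 0 := by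
    simp only [step, integrated_of_nonpos f _ le_rfl, zero_sub,
      integrated_of_nonpos f _ (neg_nonpos.2 (R.wait_pos _ _).le)]
  intro t ht i
  rcases ht.eq_or_lt with rfl | ht
  · rfl
  · rw [hzero, integrated, solution_of_pos _ _ _ ht, add_sub_cancel_left]

/-! ### Comparison -/

theorem SolvesAfter.abs_le_of_supersolution {D U : ι → ℝ → ℝ} (hD : R.SolvesAfter 0 D)
    (hpast : ∀ t ≤ 0, ∀ i, |D i t| ≤ U i t) (hU : ∀ t > 0, ∀ i, R.step U i t ≤ U i t) (t : ℝ) :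
    ∀ i, |D i t| ≤ U i t := by
  refine R.descent_induction 0 hpast (fun t ht ih i => ?_) t
  calc |D i t| = |R.step D i t| := by rw [hD t ht i]
    _ ≤ R.step U i t := R.abs_mean_le fun e => ih i e _
    _ ≤ U i t := hU t ht i

theorem HasConstDefect.sub_mem_Icc {Φ : ι → ℝ → ℝ} (hΦ : R.HasConstDefect Φ) {m M : ℝ}
    (hpast : ∀ i a b, a ≤ b → b ≤ 0 → Φ i b - Φ i a ∈ Set.Icc (m * (b - a)) (M * (b - a)))
    {a b : ℝ} (hab : a ≤ b) (i : ι) : Φ i b - Φ i a ∈ Set.Icc (m * (b - a)) (M * (b - a)) := by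
  suffices ∀ b, ∀ a ≤ b, ∀ i, Φ i b - Φ i a ∈ Set.Icc (m * (b - a)) (M * (b - a)) from
    this b a hab i
  refine R.descent_induction 0 (fun b hb a hab i => hpast i a b hab hb) fun b hb ih => ?_
  have late : ∀ a ≤ b, 0 ≤ a → ∀ i, Φ i b - Φ i a ∈ Set.Icc (m * (b - a)) (M * (b - a)) := by
    intro a hab ha i
    have hdiff : Φ i b - Φ i a = R.mean i fun e =>
        Φ (R.target i e) (b - R.wait i e) - Φ (R.target i e) (a - R.wait i e) := by
      rw [mean_sub]
      change _ = R.step Φ i b - R.step Φ i a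
      linarith [hΦ b hb.le i, hΦ a ha i]
    rw [hdiff]
    refine R.mean_mem (convex_Icc _ _) fun e => ?_
    simpa using ih i e _ (sub_le_sub_right hab _) (R.target i e)
  intro a hab i
  rcases le_total 0 a with ha | ha
  · exact late a hab ha i
  · have h₁ := late 0 hb.le le_rfl i
    have h₂ := hpast i a 0 ha le_rfl
    constructor <;> linarith [h₁.1, h₁.2, h₂.1, h₂.2]

theorem HasConstDefect.lipschitzWith {Φ : ι → ℝ → ℝ} (hΦ : R.HasConstDefect Φ) {K : NNReal}
    (hpast : ∀ i a b, a ≤ b → b ≤ 0 → |Φ i b - Φ i a| ≤ K * (b - a)) (i : ι) :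
    LipschitzWith K (Φ i) := by
  have mem_Icc_iff (x y : ℝ) : y ∈ Set.Icc (-K * x) (K * x) ↔ |y| ≤ K * x := by
    rw [Set.mem_Icc, neg_mul, abs_le]
  refine LipschitzWith.of_dist_le_mul fun a b => ?_
  wlog hab : b ≤ a generalizing a b
  · rw [dist_comm, dist_comm a]
    exact this b a (le_of_not_ge hab)
  · rw [Real.dist_eq, Real.dist_eq, abs_of_nonneg (sub_nonneg.2 hab), ← mem_Icc_iff]
    exact hΦ.sub_mem_Icc (fun i a b hab hb => (mem_Icc_iff _ _).2 (hpast i a b hab hb)) hab i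

end Finite

/-! ### Limits of increments -/

theorem tendsto_mean {α : Type*} {l : Filter α} {i : ι} {f : E i → α → ℝ} {g : E i → ℝ}
    (h : ∀ e, Tendsto (f e) l (𝓝 (g e))) :
    Tendsto (fun a => R.mean i fun e => f e a) l (𝓝 (R.mean i g)) :=
  tendsto_finsetSum _ fun e _ => (h e).const_mul (R.prob i e)

section Finite

variable [Finite ι]

theorem HasConstDefect.exists_tendsto_increment {Φ : ι → ℝ → ℝ} (hΦ : R.HasConstDefect Φ)
    (hR : R.HasDensePathLengths) {K : NNReal} (hlip : ∀ i, LipschitzWith K (Φ i)) (h : ℝ) :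
    ∃ L, ∀ i, Tendsto (fun t => Φ i (t + h) - Φ i t) atTop (𝓝 L) := by
  refine (hΦ.solvesAfter_increment (abs_nonneg h) (by linarith [neg_abs_le h])).exists_tendsto hR
    (fun i => ?_) (B := K * |h|) fun i t => ?_
  · exact ((hlip i).uniformContinuous.comp (uniformContinuous_id.add uniformContinuous_const)).sub
      (hlip i).uniformContinuous
  · simpa [Real.dist_eq] using (hlip i).dist_le_mul (t + h) t

theorem HasConstDefect.exists_slope {Φ : ι → ℝ → ℝ} (hΦ : R.HasConstDefect Φ)
    (hR : R.HasDensePathLengths) {K : NNReal} (hlip : ∀ i, LipschitzWith K (Φ i)) :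
    ∃ v, ∀ h i, Tendsto (fun t => Φ i (t + h) - Φ i t) atTop (𝓝 (h * v)) := by
  cases isEmpty_or_nonempty ι
  · exact ⟨0, fun _ => isEmptyElim⟩
  let i := Classical.arbitrary ι
  choose L hL using hΦ.exists_tendsto_increment hR hlip
  have hadd (h h' : ℝ) : L (h + h') = L h + L h' := by
    have h₁ := (hL h i).comp (tendsto_atTop_add_const_right atTop h' tendsto_id)
    refine tendsto_nhds_unique (hL (h + h') i) ((h₁.add (hL h' i)).congr fun t => ?_)
    simp only [Function.comp_apply, id_eq, add_assoc, add_comm h' h, sub_add_sub_cancel]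
  have hbound (h : ℝ) : ‖L h‖ ≤ K * ‖h‖ := by
    refine le_of_tendsto (hL h i).norm (.of_forall fun t => ?_)
    simpa [Real.dist_eq] using (hlip i).dist_le_mul (t + h) t
  have hcont := AddMonoidHomClass.continuous_of_bound (AddMonoidHom.mk' L hadd) K hbound
  refine ⟨L 1, fun h j => ?_⟩
  have hlinear : L h = h * L 1 := by
    simpa using map_real_smul (AddMonoidHom.mk' L hadd) hcont h 1
  exact hlinear ▸ hL h j

/-! ### First passage -/

variable (R) in
/-- The solution with constant pasts `c i`: the expectation of `c` at the state which the walk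
reaches when its time runs out. -/
noncomputable def firstPassage (c : ι → ℝ) : ι → ℝ → ℝ :=
  R.solution (fun i _ => c i) 0

theorem firstPassage_of_nonpos (c : ι → ℝ) (i : ι) {t : ℝ} (ht : t ≤ 0) :
    R.firstPassage c i t = c i :=
  solution_of_nonpos _ _ i ht

theorem solvesAfter_firstPassage (c : ι → ℝ) : R.SolvesAfter 0 (R.firstPassage c) := fun _ ht i =>
  (solution_of_pos _ _ i ht).trans (add_zero _)

variable (R) in
/-- The integral over time of `R.firstPassage c`, up to constants. -/
noncomputable def integratedPassage (c : ι → ℝ) : ι → ℝ → ℝ :=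
  R.integrated fun i t => c i * t

theorem integratedPassage_of_nonpos (c : ι → ℝ) (i : ι) {t : ℝ} (ht : t ≤ 0) :
    R.integratedPassage c i t = c i * t :=
  integrated_of_nonpos _ i ht

theorem hasConstDefect_integratedPassage (c : ι → ℝ) :
    R.HasConstDefect (R.integratedPassage c) :=
  hasConstDefect_integrated _

theorem lipschitzWith_integratedPassage {c : ι → ℝ} {B : NNReal} (hc : ∀ i, |c i| ≤ B) (i : ι) :
    LipschitzWith B (R.integratedPassage c i) := by
  refine (hasConstDefect_integratedPassage c).lipschitzWith (fun i a b hab hb => ?_) i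
  rw [integratedPassage_of_nonpos c i hb, integratedPassage_of_nonpos c i (hab.trans hb), ← mul_sub,
    abs_mul, abs_of_nonneg (sub_nonneg.2 hab)]
  exact mul_le_mul_of_nonneg_right (hc i) (sub_nonneg.2 hab)

variable (R) in
/-- A function whose increments over time intervals of length `h` are supersolutions of the renewal
equation after time `0`, equal to `h` at the times in `[-h, 0]`. -/
noncomputable def barrier (h : ℝ) : ι → ℝ → ℝ :=
  R.integrated fun _ t => max t (-(2 * h))

theorem barrier_of_nonpos (h : ℝ) (i : ι) {t : ℝ} (ht : t ≤ 0) :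
    R.barrier h i t = max t (-(2 * h)) :=
  integrated_of_nonpos _ i ht

theorem hasConstDefect_barrier (h : ℝ) : R.HasConstDefect (R.barrier h) :=
  hasConstDefect_integrated _

theorem lipschitzWith_barrier (h : ℝ) (i : ι) : LipschitzWith 1 (R.barrier h i) := by
  refine (hasConstDefect_barrier h).lipschitzWith (fun i a b hab hb => ?_) i
  rw [barrier_of_nonpos h i hb, barrier_of_nonpos h i (hab.trans hb)]
  simpa [abs_of_nonneg (sub_nonneg.2 hab)] using abs_max_sub_max_le_abs b a (-(2 * h))

theorem barrier_defect_le {h : ℝ} (hh : 0 ≤ h) (i : ι) (t : ℝ) :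
    R.barrier h i t - R.step (R.barrier h) i t ≤ R.barrier h i 0 - R.step (R.barrier h) i 0 := by
  rcases le_or_gt 0 t with ht | ht
  · exact (hasConstDefect_barrier h t ht i).le
  · rw [sub_step, sub_step]
    refine R.mean_mono fun e => ?_
    have hw := R.wait_pos i e
    rw [barrier_of_nonpos h _ ht.le, barrier_of_nonpos h _ le_rfl,
      barrier_of_nonpos h _ (by linarith), barrier_of_nonpos h _ (by linarith)]
    rcases max_cases t (-(2 * h)) with ⟨h₁, _⟩ | ⟨h₁, _⟩ <;>
    rcases max_cases (t - R.wait i e) (-(2 * h)) with ⟨h₂, _⟩ | ⟨h₂, _⟩ <;>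
    rcases max_cases (0 - R.wait i e) (-(2 * h)) with ⟨h₃, _⟩ | ⟨h₃, _⟩ <;>
    rw [h₁, h₂, h₃, max_eq_left (by linarith)] <;> linarith

theorem step_barrier_increment_le {h t : ℝ} (hh : 0 ≤ h) (ht : 0 < t) (i : ι) :
    R.step (fun i t => R.barrier h i t - R.barrier h i (t - h)) i t ≤
      R.barrier h i t - R.barrier h i (t - h) := by
  simp only [sub_eq_add_neg _ h]
  rw [step_sub (R.barrier h), step_comp_add]
  linarith [barrier_defect_le hh i (t + -h) (R := R), hasConstDefect_barrier h t ht.le i (R := R)]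

theorem abs_increment_sub_firstPassage_le_of_nonpos {c : ι → ℝ} {B : NNReal}
    (hc : ∀ i, |c i| ≤ B) {h t : ℝ} (hh : 0 < h) (ht : t ≤ 0) (i : ι) :
    |R.integratedPassage c i (t + h) - R.integratedPassage c i t - h * R.firstPassage c i t| ≤
      2 * B * (R.barrier h i t - R.barrier h i (t - h)) := by
  rw [firstPassage_of_nonpos c i ht, barrier_of_nonpos h i ht,
    barrier_of_nonpos h i (t := t - h) (by linarith)]
  rcases le_or_gt t (-h) with hth | hth
  · rw [integratedPassage_of_nonpos c i ht, integratedPassage_of_nonpos c i (by linarith)]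
    have hzero : c i * (t + h) - c i * t - h * c i = 0 := by ring
    rw [hzero, abs_zero]
    exact mul_nonneg (by positivity) (sub_nonneg.2 (max_le_max_right _ (by linarith)))
  · rw [max_eq_left (by linarith), max_eq_left (by linarith)]
    have hlip := (lipschitzWith_integratedPassage (R := R) hc i).dist_le_mul (t + h) t
    rw [Real.dist_eq, Real.dist_eq, add_sub_cancel_left, abs_of_pos hh] at hlip
    calc _ ≤ B * h + h * B := (abs_sub _ _).trans (add_le_add hlip ?_)
      _ = _ := by ring
    rw [abs_mul, abs_of_pos hh]
    exact mul_le_mul_of_nonneg_left (hc i) hh.le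

theorem abs_increment_sub_firstPassage_le {c : ι → ℝ} {B : NNReal} (hc : ∀ i, |c i| ≤ B) {h : ℝ}
    (hh : 0 < h) (t : ℝ) (i : ι) :
    |R.integratedPassage c i (t + h) - R.integratedPassage c i t - h * R.firstPassage c i t| ≤
      2 * B * (R.barrier h i t - R.barrier h i (t - h)) := by
  refine SolvesAfter.abs_le_of_supersolution (R := R)
    (D := fun i t => R.integratedPassage c i (t + h) - R.integratedPassage c i t -
      h * R.firstPassage c i t)
    (U := fun i t => 2 * B * (R.barrier h i t - R.barrier h i (t - h)))
    (fun t ht i => ?_)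
    (fun t ht => abs_increment_sub_firstPassage_le_of_nonpos hc hh ht) (fun t ht i => ?_) t i
  · rw [step_sub (fun i t => R.integratedPassage c i (t + h) - R.integratedPassage c i t),
      step_const_mul, ← solvesAfter_firstPassage c t ht i,
      ← (hasConstDefect_integratedPassage c).solvesAfter_increment le_rfl (by linarith) t ht i]
  · rw [step_const_mul]
    exact mul_le_mul_of_nonneg_left (step_barrier_increment_le hh.le ht i) (by positivity)

end Finite

section Fintype

variable [Fintype ι]

/-! ### Stationary measures -/

variable (R) in
/-- A stationary measure of the chain of states, normalized so that the mean waiting time is `1`.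
-/
structure IsStationary (q : ι → ℝ) : Prop where
  nonneg : ∀ i, 0 ≤ q i
  sum_mul_mean_target : ∀ g : ι → ℝ,
    ∑ i, q i * R.mean i (fun e => g (R.target i e)) = ∑ i, q i * g i
  sum_mul_mean_wait : ∑ i, q i * R.mean i (R.wait i) = 1

variable {q : ι → ℝ}

theorem IsStationary.sum_mul_mean_sub (hq : R.IsStationary q) (Φ : ι → ℝ → ℝ) (t : ℝ) :
    ∑ i, q i * R.mean i (fun e => Φ (R.target i e) t - Φ (R.target i e) (t - R.wait i e)) =
      ∑ i, q i * (Φ i t - R.step Φ i t) := by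
  simp only [mean_sub, mul_sub, Finset.sum_sub_distrib, hq.sum_mul_mean_target fun i => Φ i t, step]

/-- The stationary mean of the increments over one transition does not depend on the time, and
tends to the slope. -/
theorem HasConstDefect.tendsto_increment {Φ : ι → ℝ → ℝ} (hΦ : R.HasConstDefect Φ)
    (hR : R.HasDensePathLengths) {K : NNReal} (hlip : ∀ i, LipschitzWith K (Φ i))
    (hq : R.IsStationary q) (h : ℝ) (i : ι) :
    Tendsto (fun t => Φ i (t + h) - Φ i t) atTop (𝓝 (h *
      ∑ j, q j * R.mean j fun e => Φ (R.target j e) 0 - Φ (R.target j e) (-R.wait j e))) := by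
  obtain ⟨v, hv⟩ := hΦ.exists_slope hR hlip
  have hlim : Tendsto (fun t => ∑ j, q j * R.mean j
      fun e => Φ (R.target j e) t - Φ (R.target j e) (t - R.wait j e)) atTop
      (𝓝 (∑ j, q j * R.mean j fun e => v * R.wait j e)) := by
    refine tendsto_finsetSum _ fun j _ => (tendsto_mean fun e => ?_).const_mul _
    convert (hv (-R.wait j e) (R.target j e)).neg using 2 <;> ring_nf
  have hconst : ∀ᶠ t in atTop, ∑ j, q j * R.mean j
      (fun e => Φ (R.target j e) t - Φ (R.target j e) (t - R.wait j e)) =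
      ∑ j, q j * R.mean j fun e => Φ (R.target j e) 0 - Φ (R.target j e) (-R.wait j e) := by
    filter_upwards [eventually_ge_atTop 0] with t ht
    simp only [← zero_sub (R.wait _ _), hq.sum_mul_mean_sub, hΦ t ht]
  have hslope :=
    tendsto_nhds_unique (tendsto_const_nhds.congr' (hconst.mono fun _ h => h.symm)) hlim
  simp only [mean_const_mul, mul_left_comm _ v, ← Finset.mul_sum, hq.sum_mul_mean_wait,
    mul_one] at hslope
  exact hslope ▸ hv h i

theorem tendsto_integratedPassage_increment (hR : R.HasDensePathLengths) (hq : R.IsStationary q)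
    (c : ι → ℝ) (h : ℝ) (i : ι) :
    Tendsto (fun t => R.integratedPassage c i (t + h) - R.integratedPassage c i t) atTop
      (𝓝 (h * ∑ j, q j * R.mean j fun e => R.wait j e * c (R.target j e))) := by
  have hc : ∀ i, |c i| ≤ ‖c‖₊ := norm_le_pi_norm c
  convert (hasConstDefect_integratedPassage c).tendsto_increment hR
    (lipschitzWith_integratedPassage hc) hq h i using 8 with j _ e
  rw [integratedPassage_of_nonpos c _ le_rfl,
    integratedPassage_of_nonpos c _ (neg_nonpos.2 (R.wait_pos j e).le)]
  ring

theorem eventually_barrier_increment_lt (hR : R.HasDensePathLengths) (hq : R.IsStationary q)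
    {h : ℝ} (hh : 0 < h) (i : ι) :
    ∀ᶠ t in atTop, R.barrier h i t - R.barrier h i (t - h) < h * (2 * h * ∑ j, q j + h) := by
  have hlim := ((hasConstDefect_barrier h).tendsto_increment hR
    (lipschitzWith_barrier (R := R) h) hq (-h) i).neg
  have hslope : ∑ j, q j * R.mean j (fun e =>
      R.barrier h (R.target j e) 0 - R.barrier h (R.target j e) (-R.wait j e)) ≤
        2 * h * ∑ j, q j := by
    rw [Finset.mul_sum]
    refine Finset.sum_le_sum fun j _ => ?_
    rw [mul_comm]
    refine mul_le_mul_of_nonneg_right ?_ (hq.nonneg j)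
    refine (R.mean_mono fun e => ?_).trans_eq (R.mean_const j (2 * h))
    rw [barrier_of_nonpos h _ le_rfl, barrier_of_nonpos h _ (neg_nonpos.2 (R.wait_pos j e).le),
      max_eq_left (by linarith)]
    linarith [le_max_right (-R.wait j e) (-(2 * h))]
  filter_upwards [hlim.eventually_lt_const (u := h * (2 * h * ∑ j, q j + h)) (by
    rw [neg_mul, neg_neg]
    gcongr
    linarith)] with t ht
  rwa [neg_sub, ← sub_eq_add_neg] at ht

theorem eventually_abs_firstPassage_sub_lt (hR : R.HasDensePathLengths) (hq : R.IsStationary q)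
    (c : ι → ℝ) {h : ℝ} (hh : 0 < h) (i : ι) :
    ∀ᶠ t in atTop,
      |R.firstPassage c i t - ∑ j, q j * R.mean j fun e => R.wait j e * c (R.target j e)| <
        h * (2 * ‖c‖ * (2 * ∑ j, q j + 1) + 1) := by
  set C := ∑ j, q j * R.mean j fun e => R.wait j e * c (R.target j e)
  have hlim := ((tendsto_integratedPassage_increment hR hq c h i).sub_const (h * C)).abs
  rw [sub_self, abs_zero] at hlim
  filter_upwards [hlim.eventually_lt_const (u := h * h) (by positivity),
    eventually_barrier_increment_lt hR hq hh i] with t hinc hbar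
  have hcmp := abs_increment_sub_firstPassage_le (R := R) (B := ‖c‖₊) (norm_le_pi_norm c) hh t i
  rw [abs_sub_comm, coe_nnnorm] at hcmp
  refine lt_of_mul_lt_mul_left ?_ hh.le
  calc h * |R.firstPassage c i t - C| = |h * R.firstPassage c i t - h * C| := by
        rw [← mul_sub, abs_mul, abs_of_pos hh]
    _ ≤ _ := abs_sub_le _ (R.integratedPassage c i (t + h) - R.integratedPassage c i t) _
    _ < 2 * ‖c‖ * (h * (2 * h * ∑ j, q j + h)) + h * h := by
        refine add_lt_add_of_le_of_lt (hcmp.trans ?_) hinc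
        gcongr
    _ = _ := by ring

theorem tendsto_firstPassage (hR : R.HasDensePathLengths) (hq : R.IsStationary q) (c : ι → ℝ)
    (i : ι) :
    Tendsto (R.firstPassage c i) atTop
      (𝓝 (∑ j, q j * R.mean j fun e => R.wait j e * c (R.target j e))) := by
  have hK : 0 < 2 * ‖c‖ * (2 * ∑ j, q j + 1) + 1 := by
    have := Finset.sum_nonneg fun j (_ : j ∈ Finset.univ) => hq.nonneg j
    positivity
  refine Metric.tendsto_nhds.2 fun ε hε => ?_
  have := eventually_abs_firstPassage_sub_lt hR hq c (div_pos hε hK) i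
  rwa [div_mul_cancel₀ ε hK.ne'] at this

end Fintype

end RenewalSystem

/-! ### Irreducible stochastic matrices -/

section StochasticMatrix

variable {ι : Type*} {M : Matrix ι ι ℝ}

theorem isIrreducible_of_transGen (hnonneg : ∀ i j, 0 ≤ M i j)
    (htrans : ∀ i j, Relation.TransGen (fun a b => 0 < M a b) i j) : M.IsIrreducible := by
  let : Quiver ι := M.toQuiver
  refine ⟨hnonneg, fun i j => ?_⟩
  induction htrans i j with
  | single h => exact ⟨Quiver.Hom.toPath ⟨h⟩, Nat.one_pos⟩
  | tail _ h ih => exact ⟨ih.choose.cons ⟨h⟩, Nat.succ_pos _⟩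

theorem mem_of_isIrreducible_of_closed (hirr : M.IsIrreducible) {s : Set ι}
    (hs : ∀ i ∈ s, ∀ j, 0 < M i j → j ∈ s) {i : ι} (hi : i ∈ s) (j : ι) : j ∈ s := by
  let : Quiver ι := M.toQuiver
  obtain ⟨p, -⟩ := hirr.connected i j
  induction p with
  | nil => exact hi
  | cons _ e ih => exact hs _ ih _ e.down

variable [Fintype ι] [DecidableEq ι]

/-- The maximum principle: the set where a maximum larger than `v j` is attained would be closed
under the edges of `M`. -/
theorem le_apply_of_subharmonic (hM : M ∈ Matrix.rowStochastic ℝ ι) (hirr : M.IsIrreducible)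
    {v : ι → ℝ} {j : ι} (hv : ∀ i, v j < v i → v i ≤ (M.mulVec v) i) (i : ι) : v i ≤ v j := by
  have : Nonempty ι := ⟨j⟩
  obtain ⟨m, hm⟩ := Finite.exists_max v
  suffices hmj : v m ≤ v j from (hm i).trans hmj
  by_contra! hjm
  have hclosed : ∀ a ∈ {a | v a = v m}, ∀ b, 0 < M a b → b ∈ {a | v a = v m} := by
    intro a (ha : v a = v m) b hab
    have hterm : ∀ k ∈ Finset.univ, 0 ≤ M a k * (v m - v k) := fun k _ =>
      mul_nonneg (hirr.nonneg a k) (sub_nonneg.2 (hm k))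
    have hsum : ∑ k, M a k * (v m - v k) = v m - (M.mulVec v) a := by
      simp only [mul_sub, Finset.sum_sub_distrib, ← Finset.sum_mul, Matrix.mulVec, dotProduct,
        Matrix.sum_row_of_mem_rowStochastic hM, one_mul]
    have hle := hv a (ha ▸ hjm)
    have hzero := (Finset.sum_eq_zero_iff_of_nonneg hterm).1
      (le_antisymm (by linarith) (Finset.sum_nonneg hterm)) b (Finset.mem_univ b)
    exact (sub_eq_zero.1 ((mul_eq_zero.1 hzero).resolve_left hab.ne')).symm
  exact hjm.ne (mem_of_isIrreducible_of_closed hirr hclosed (i := m) rfl j)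

theorem det_one_sub_of_mem_rowStochastic [Nonempty ι] (hM : M ∈ Matrix.rowStochastic ℝ ι) :
    (1 - M).det = 0 := by
  refine Matrix.exists_mulVec_eq_zero_iff.1 ⟨1, one_ne_zero, ?_⟩
  rw [Matrix.sub_mulVec, Matrix.one_mulVec, Matrix.one_vecMul_of_mem_rowStochastic hM, sub_self]

theorem adjugate_one_sub_row_eq (hM : M ∈ Matrix.rowStochastic ℝ ι) (hirr : M.IsIrreducible)
    (a b : ι) : (1 - M).adjugate a = (1 - M).adjugate b := by
  have : Nonempty ι := ⟨a⟩
  have hharm : M * (1 - M).adjugate = (1 - M).adjugate := by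
    have h := Matrix.mul_adjugate (1 - M)
    rw [det_one_sub_of_mem_rowStochastic hM, zero_smul, Matrix.sub_mul, Matrix.one_mul] at h
    exact (sub_eq_zero.1 h).symm
  have hle : ∀ i j c, (1 - M).adjugate i c ≤ (1 - M).adjugate j c := fun i j c =>
    le_apply_of_subharmonic hM hirr (v := fun k => (1 - M).adjugate k c)
      (fun k _ => (congrFun (congrFun hharm k) c).ge) i
  exact funext fun c => le_antisymm (hle a b c) (hle b a c)

theorem vecMul_adjugate_one_sub [Nonempty ι] (hM : M ∈ Matrix.rowStochastic ℝ ι) (a : ι) :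
    Matrix.vecMul ((1 - M).adjugate a) M = (1 - M).adjugate a := by
  have h := Matrix.adjugate_mul (1 - M)
  rw [det_one_sub_of_mem_rowStochastic hM, zero_smul, Matrix.mul_sub, Matrix.mul_one] at h
  exact (congrFun (sub_eq_zero.1 h) a).symm

theorem adjugate_one_sub_smul_diag_ne_zero (hM : M ∈ Matrix.rowStochastic ℝ ι)
    (hirr : M.IsIrreducible) {t : ℝ} (ht : t ∈ Set.Icc (0 : ℝ) 1) (j : ι) :
    (1 - t • M).adjugate j j ≠ 0 := by
  rw [Matrix.adjugate_apply]
  intro hdet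
  obtain ⟨v, hv, hker⟩ := Matrix.exists_mulVec_eq_zero_iff.2 hdet
  have hvj : v j = 0 := by
    simpa [Matrix.mulVec, Matrix.updateRow_self] using congrFun hker j
  have hharm : ∀ i, i ≠ j → v i = t * (M.mulVec v) i := by
    intro i hij
    have h : ((1 - t • M).mulVec v) i = 0 := by
      simpa only [Matrix.mulVec, Matrix.updateRow_ne hij, Pi.zero_apply] using congrFun hker i
    rwa [Matrix.sub_mulVec, Matrix.one_mulVec, Matrix.smul_mulVec, Pi.sub_apply, sub_eq_zero] at h
  have hle : ∀ w : ι → ℝ, w j = 0 → (∀ i, i ≠ j → w i = t * (M.mulVec w) i) → ∀ i, w i ≤ 0 := by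
    intro w hwj hw
    refine hwj ▸ le_apply_of_subharmonic hM hirr fun i hi => ?_
    rw [hwj] at hi
    have hwi := hw i (ne_of_apply_ne w (by rw [hwj]; exact hi.ne'))
    have hpos : 0 < (M.mulVec w) i := pos_of_mul_pos_right (hwi ▸ hi) ht.1
    exact hwi.le.trans (mul_le_of_le_one_left hpos.le ht.2)
  refine hv (funext fun i => le_antisymm (hle v hvj hharm i) ?_)
  refine neg_nonpos.1 (hle (-v) (by rw [Pi.neg_apply, hvj, neg_zero]) (fun k hk => ?_) i)
  rw [Matrix.mulVec_neg, Pi.neg_apply, Pi.neg_apply, mul_neg, ← hharm k hk]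

/-- A principal minor of `1 - t • M` is `1` at `t = 0` and does not vanish for `t ∈ [0, 1]`. -/
theorem adjugate_one_sub_diag_pos (hM : M ∈ Matrix.rowStochastic ℝ ι) (hirr : M.IsIrreducible)
    (j : ι) : 0 < (1 - M).adjugate j j := by
  let f : ℝ → ℝ := fun t => (1 - t • M).adjugate j j
  have hcont : Continuous f := by
    have h : Continuous fun t : ℝ => 1 - t • M := by fun_prop
    exact h.matrix_adjugate.matrix_elem j j
  have hf0 : f 0 = 1 := by
    simp only [f, zero_smul, sub_zero, Matrix.adjugate_one, Matrix.one_apply_eq]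
  have hf1 : f 1 = (1 - M).adjugate j j := by simp only [f, one_smul]
  by_contra! hneg
  obtain ⟨t, ht, hft⟩ := intermediate_value_Icc' zero_le_one hcont.continuousOn
    (show (0 : ℝ) ∈ Set.Icc (f 1) (f 0) from ⟨hf1.trans_le hneg, hf0 ▸ zero_le_one⟩)
  exact adjugate_one_sub_smul_diag_ne_zero hM hirr ht j hft

theorem adjugate_one_sub_pos (hM : M ∈ Matrix.rowStochastic ℝ ι) (hirr : M.IsIrreducible)
    (a b : ι) : 0 < (1 - M).adjugate a b :=
  adjugate_one_sub_row_eq hM hirr b a ▸ adjugate_one_sub_diag_pos hM hirr b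

end StochasticMatrix

/-! ### Tiles and their similar copies -/

section Tile

variable {d : ℕ} {A B : Set (Euc d)}

theorem aedisjoint_of_disjoint_interior (hA : volume (frontier A) = 0)
    (hB : volume (frontier B) = 0) (h : Disjoint (interior A) (interior B)) :
    AEDisjoint volume A B := by
  refine measure_mono_null (fun x hx => ?_) (measure_union_null hA hB)
  by_cases hxA : x ∈ interior A
  · exact Or.inr ⟨subset_closure hx.2, Set.disjoint_left.1 h hxA⟩
  · exact Or.inl ⟨subset_closure hx.1, hxA⟩

theorem volume_image_isometryEquiv (φ : Euc d ≃ᵢ Euc d) (A : Set (Euc d)) :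
    volume (φ '' A) = volume A := by
  rw [← EuclideanSpace.euclideanHausdorffMeasure_eq_volume,
    φ.isometry.euclideanHausdorffMeasure_image]

variable (φ : Euc d ≃ᵢ Euc d) {a : ℝ}

theorem volume_image_smul (ha : 0 < a) (A : Set (Euc d)) :
    volume (φ '' (a • A)) = ENNReal.ofReal (a ^ d) * volume A := by
  rw [volume_image_isometryEquiv, Measure.addHaar_smul, finrank_euclideanSpace_fin,
    abs_of_pos (pow_pos ha d)]

theorem toReal_volume_image_smul (ha : 0 < a) (A : Set (Euc d)) :
    (volume (φ '' (a • A))).toReal = a ^ d * (volume A).toReal := by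
  rw [volume_image_smul φ ha, ENNReal.toReal_mul, ENNReal.toReal_ofReal (pow_nonneg ha.le d)]

theorem frontier_image_smul (ha : a ≠ 0) (A : Set (Euc d)) :
    frontier (φ '' (a • A)) = φ '' (a • frontier A) := by
  rw [← Set.image_smul, ← Set.image_smul, ← φ.coe_toHomeomorph, ← Homeomorph.image_frontier]
  exact congrArg _ ((Homeomorph.smulOfNeZero a ha).image_frontier A).symm

theorem aedisjoint_image_smul (ha : 0 < a) (h : AEDisjoint volume A B) :
    AEDisjoint volume (φ '' (a • A)) (φ '' (a • B)) := by
  rw [AEDisjoint, ← Set.image_inter φ.injective, ← Set.smul_set_inter₀ ha.ne',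
    volume_image_smul φ ha, h.eq, mul_zero]

theorem IsTile.toReal_volume_pos (hA : IsTile A) : 0 < (volume A).toReal :=
  ENNReal.toReal_pos hA.2.2.1.ne' hA.1.measure_lt_top.ne

theorem IsTile.image_smul (hA : IsTile A) (ha : 0 < a) : IsTile (φ '' (a • A)) := by
  have hfrontier : volume (frontier (φ '' (a • A))) = 0 := by
    rw [frontier_image_smul φ ha.ne', volume_image_smul φ ha, hA.2.2.2, mul_zero]
  refine ⟨φ.isometry.lipschitz.isBounded_image (hA.1.smul₀ a),
    nullMeasurableSet_of_null_frontier hfrontier, ?_, hfrontier⟩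
  rw [volume_image_smul φ ha]
  exact ENNReal.mul_pos (ENNReal.ofReal_pos.2 (pow_pos ha d)).ne' hA.2.2.1.ne'

end Tile

/-! ### The renewal system of a substitution scheme -/

namespace MSScheme

variable {d n : ℕ} {σ : MSScheme d n}

theorem isTile_rule {ϱ : (i j : Fin n) → Fin (σ.numSub i j) → Set (Euc d)} (hϱ : ϱ ∈ σ.rules)
    (i j : Fin n) (k : Fin (σ.numSub i j)) : IsTile (ϱ i j k) := by
  obtain ⟨φ, hφ⟩ := σ.rules_iso ϱ hϱ i j k
  exact hφ ▸ (σ.tile j).image_smul φ (σ.scale_pos i j k)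

variable (σ) in
/-- The index type of the list `ω_σ(T i)` of substitution tiles of the prototile `T i`. -/
abbrev Piece (i : Fin n) : Type :=
  Σ j, Fin (σ.numSub i j)

variable (σ) in
/-- The relative volume `β ^ d` of a substitution tile in its prototile. -/
noncomputable def relVol (i : Fin n) (e : σ.Piece i) : ℝ :=
  σ.beta i e.1 e.2 ^ d

theorem relVol_pos (i : Fin n) (e : σ.Piece i) : 0 < σ.relVol i e :=
  pow_pos (σ.beta_pos i e.1 e.2) d

theorem log_one_div_beta_pos (i : Fin n) (e : σ.Piece i) :
    0 < Real.log (1 / σ.beta i e.1 e.2) :=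
  Real.log_pos (one_lt_one_div (σ.beta_pos i e.1 e.2) (σ.beta_lt_one i e.1 e.2))

theorem log_relVol (i : Fin n) (e : σ.Piece i) :
    Real.log (σ.relVol i e) = -(d * Real.log (1 / σ.beta i e.1 e.2)) := by
  rw [relVol, Real.log_pow, one_div, Real.log_inv, mul_neg, neg_neg]

variable [NeZero d]

theorem relVol_lt_one (i : Fin n) (e : σ.Piece i) : σ.relVol i e < 1 :=
  pow_lt_one₀ (σ.beta_pos i e.1 e.2).le (σ.beta_lt_one i e.1 e.2) (NeZero.ne d)

theorem relVol_mul_volume (i : Fin n) (e : σ.Piece i) :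
    σ.relVol i e * (volume (σ.T i)).toReal =
      σ.scale i e.1 e.2 ^ d * (volume (σ.T e.1)).toReal := by
  have hi := (σ.tile i).toReal_volume_pos
  have hj := (σ.tile e.1).toReal_volume_pos
  rw [relVol, beta, mul_pow, one_div, Real.rpow_inv_natCast_pow (by positivity) (NeZero.ne d)]
  field_simp

theorem toReal_volume_rule {ϱ : (i j : Fin n) → Fin (σ.numSub i j) → Set (Euc d)}
    (hϱ : ϱ ∈ σ.rules) (i : Fin n) (e : σ.Piece i) :
    (volume (ϱ i e.1 e.2)).toReal = σ.relVol i e * (volume (σ.T i)).toReal := by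
  obtain ⟨φ, hφ⟩ := σ.rules_iso ϱ hϱ i e.1 e.2
  rw [hφ, toReal_volume_image_smul φ (σ.scale_pos i e.1 e.2), relVol_mul_volume]

omit [NeZero d] in
theorem aedisjoint_rule {ϱ : (i j : Fin n) → Fin (σ.numSub i j) → Set (Euc d)} (hϱ : ϱ ∈ σ.rules)
    (i : Fin n) {e e' : σ.Piece i} (hne : e ≠ e') :
    AEDisjoint volume (ϱ i e.1 e.2) (ϱ i e'.1 e'.2) :=
  aedisjoint_of_disjoint_interior (isTile_rule hϱ i e.1 e.2).2.2.2
    (isTile_rule hϱ i e'.1 e'.2).2.2.2 (σ.rules_disjoint ϱ hϱ i e e' hne)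

theorem sum_relVol (i : Fin n) : ∑ e, σ.relVol i e = 1 := by
  obtain ⟨ϱ, hϱ⟩ := σ.rules_nonempty
  have hsum : (volume (σ.T i)).toReal = ∑ e : σ.Piece i, (volume (ϱ i e.1 e.2)).toReal := by
    rw [← σ.rules_cover ϱ hϱ i, measure_iUnion₀ (fun e e' => aedisjoint_rule hϱ i)
      fun e => (isTile_rule hϱ i e.1 e.2).2.1, tsum_fintype,
      ENNReal.toReal_sum fun e _ => (isTile_rule hϱ i e.1 e.2).1.measure_lt_top.ne]
  simp only [toReal_volume_rule hϱ, ← Finset.sum_mul] at hsum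
  exact mul_right_cancel₀ (σ.tile i).toReal_volume_pos.ne' (by rw [one_mul, ← hsum])

variable (σ) in
/-- The renewal system of a scheme: its states are the types, and a substitution tile of `T i` is
chosen with probability its relative volume `β ^ d` and takes the time `log (1 / β)`. -/
noncomputable def renewal : RenewalSystem (Fin n) σ.Piece where
  target _ e := e.1
  prob i e := σ.relVol i e
  wait i e := Real.log (1 / σ.beta i e.1 e.2)
  prob_pos i e := relVol_pos i e
  sum_prob i := sum_relVol i
  wait_pos i e := log_one_div_beta_pos i e

/-! ### Path lengths in an incommensurable scheme -/

omit [NeZero d] in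
/-- In dimension zero every logarithm of a volume ratio vanishes. -/
theorem Incommensurable.dim_ne_zero (h : σ.Incommensurable) : d ≠ 0 := by
  rintro rfl
  obtain ⟨i, j, a, b, ⟨m, -, p, -, -, e, rfl⟩, -, hq⟩ := h
  exact hq 0 (by simp)

theorem renewal_path_single (i j : Fin n) (k : Fin (σ.numSub i j)) :
    σ.renewal.Path i j (Real.log (1 / σ.beta i j k)) :=
  RenewalSystem.Path.single (R := σ.renewal) (⟨j, k⟩ : σ.Piece i)

theorem Irreducible.exists_renewal_path (hirr : σ.Irreducible) (i j : Fin n) :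
    ∃ x, σ.renewal.Path i j x := by
  induction hirr i j with
  | single h => exact ⟨_, renewal_path_single _ _ ⟨0, h⟩⟩
  | tail _ h ih =>
    obtain ⟨x, hx⟩ := ih
    exact ⟨_, hx.trans (renewal_path_single _ _ ⟨0, h⟩)⟩

theorem renewal_path_of_fin {m : ℕ} (p : Fin (m + 2) → Fin n)
    (e : (t : Fin (m + 1)) → Fin (σ.numSub (p t.castSucc) (p t.succ))) :
    σ.renewal.Path (p 0) (p (Fin.last (m + 1)))
      (∑ t, Real.log (1 / σ.beta (p t.castSucc) (p t.succ) (e t))) := by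
  induction m with
  | zero => simpa using renewal_path_single _ _ (e 0)
  | succ m ih =>
    rw [Fin.sum_univ_succ]
    exact (renewal_path_single _ _ (e 0)).trans (ih (fun t => p t.succ) fun t => e t.succ)

theorem IsClosedPathLogVol.exists_renewal_path {i : Fin n} {a : ℝ}
    (h : σ.IsClosedPathLogVol i a) : ∃ x, σ.renewal.Path i i x ∧ a = -(d * x) := by
  obtain ⟨m, hm, p, hp₀, hp₁, e, rfl⟩ := h
  obtain ⟨m, rfl⟩ := Nat.exists_eq_succ_of_ne_zero hm.ne'
  have hpath := renewal_path_of_fin p e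
  rw [hp₀, hp₁] at hpath
  refine ⟨_, hpath, ?_⟩
  rw [Finset.mul_sum, ← Finset.sum_neg_distrib]
  exact Finset.sum_congr rfl fun t _ => log_relVol _ ⟨_, e t⟩

theorem Incommensurable.hasDensePathLengths (hinc : σ.Incommensurable) (hirr : σ.Irreducible) :
    σ.renewal.HasDensePathLengths := by
  obtain ⟨i, j, a, b, ha, hb, hab⟩ := hinc
  obtain ⟨x, hx, rfl⟩ := ha.exists_renewal_path
  obtain ⟨y, hy, rfl⟩ := hb.exists_renewal_path
  refine σ.renewal.hasDensePathLengths_of_irrational hirr.exists_renewal_path hx hy ?_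
  rintro ⟨q, hq⟩
  refine hab q ?_
  rw [(div_eq_iff hy.pos.ne').1 hq.symm]
  ring

/-! ### The matrix `Q_σ` -/

theorem mulVec_Mmat (g : Fin n → ℝ) (i : Fin n) :
    ((Mmat σ).mulVec g) i = σ.renewal.mean i fun e => g e.1 := by
  rw [RenewalSystem.mean, Fintype.sum_sigma]
  simp only [Matrix.mulVec, dotProduct, Mmat, Matrix.of_apply, Finset.sum_mul]
  rfl

theorem sum_M'mat (i : Fin n) : ∑ j, M'mat σ i j = -σ.renewal.mean i (σ.renewal.wait i) := by
  rw [RenewalSystem.mean, Fintype.sum_sigma, ← Finset.sum_neg_distrib]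
  refine Finset.sum_congr rfl fun j _ => ?_
  simp only [M'mat, Matrix.of_apply, renewal, relVol, one_div, Real.log_inv, mul_neg,
    Finset.sum_neg_distrib, neg_neg]

omit [NeZero d] in
theorem Mmat_nonneg (i j : Fin n) : 0 ≤ Mmat σ i j := by
  rw [Mmat, Matrix.of_apply]
  exact Finset.sum_nonneg fun k _ => (relVol_pos i ⟨j, k⟩).le

variable (σ) in
theorem Mmat_mem_rowStochastic : Mmat σ ∈ Matrix.rowStochastic ℝ (Fin n) := by
  refine Matrix.mem_rowStochastic.2 ⟨Mmat_nonneg, funext fun i => ?_⟩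
  exact (mulVec_Mmat 1 i).trans (σ.renewal.mean_const i 1)

omit [NeZero d] in
theorem Irreducible.isIrreducible_Mmat (hirr : σ.Irreducible) : (Mmat σ).IsIrreducible := by
  refine isIrreducible_of_transGen Mmat_nonneg fun i j =>
    Relation.TransGen.mono (fun a b hab => ?_) i j (hirr i j)
  have : Nonempty (Fin (σ.numSub a b)) := ⟨⟨0, hab⟩⟩
  rw [Mmat, Matrix.of_apply]
  exact Finset.sum_pos (fun k _ => relVol_pos a ⟨b, k⟩) Finset.univ_nonempty

/-- Since all rows of the adjugate agree, the trace in `Q_σ` is the mean of the waiting times with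
respect to any of its rows. -/
theorem Irreducible.neg_trace_eq (hirr : σ.Irreducible) (a : Fin n) :
    -((1 - Mmat σ).adjugate * M'mat σ).trace =
      ∑ i, (1 - Mmat σ).adjugate a i * σ.renewal.mean i (σ.renewal.wait i) := by
  simp only [Matrix.trace, Matrix.diag_apply, Matrix.mul_apply,
    adjugate_one_sub_row_eq (Mmat_mem_rowStochastic σ) hirr.isIrreducible_Mmat _ a]
  rw [Finset.sum_comm, ← Finset.sum_neg_distrib]
  exact Finset.sum_congr rfl fun i _ => by rw [← Finset.mul_sum, sum_M'mat, mul_neg, neg_neg]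

theorem Irreducible.neg_trace_pos (hirr : σ.Irreducible) (a : Fin n) :
    0 < -((1 - Mmat σ).adjugate * M'mat σ).trace := by
  rw [hirr.neg_trace_eq a]
  refine Finset.sum_pos (fun i _ => mul_pos
    (adjugate_one_sub_pos (Mmat_mem_rowStochastic σ) hirr.isIrreducible_Mmat a i) ?_)
    ⟨a, Finset.mem_univ a⟩
  refine Finset.sum_pos (fun e _ => mul_pos (relVol_pos i e) (log_one_div_beta_pos i e)) ?_
  exact Finset.nonempty_of_sum_ne_zero ((sum_relVol i).trans_ne one_ne_zero)

theorem Irreducible.Qmat_pos (hirr : σ.Irreducible) (a b : Fin n) : 0 < Qmat σ a b :=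
  mul_pos (inv_pos.2 (hirr.neg_trace_pos a))
    (adjugate_one_sub_pos (Mmat_mem_rowStochastic σ) hirr.isIrreducible_Mmat a b)

theorem Irreducible.Qmat_row_eq (hirr : σ.Irreducible) (a b : Fin n) : Qmat σ a = Qmat σ b := by
  ext c
  rw [Qmat, Matrix.smul_apply, Matrix.smul_apply,
    adjugate_one_sub_row_eq (Mmat_mem_rowStochastic σ) hirr.isIrreducible_Mmat a b]

theorem vecMul_Qmat_row (a : Fin n) : Matrix.vecMul (Qmat σ a) (Mmat σ) = Qmat σ a := by
  have : Nonempty (Fin n) := ⟨a⟩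
  set c := (-((1 - Mmat σ).adjugate * M'mat σ).trace)⁻¹
  exact (Matrix.smul_vecMul c _ _).trans
    (congrArg (c • ·) (vecMul_adjugate_one_sub (Mmat_mem_rowStochastic σ) a))

theorem Irreducible.isStationary_Qmat_row (hirr : σ.Irreducible) (a : Fin n) :
    σ.renewal.IsStationary (Qmat σ a) where
  nonneg i := (hirr.Qmat_pos a i).le
  sum_mul_mean_target g := by
    have h := Matrix.dotProduct_mulVec (Qmat σ a) (Mmat σ) g
    rw [vecMul_Qmat_row] at h
    simp only [dotProduct, mulVec_Mmat] at h
    exact h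
  sum_mul_mean_wait := by
    simp only [Qmat, Matrix.smul_apply, smul_eq_mul, mul_assoc, ← Finset.mul_sum]
    rw [← hirr.neg_trace_eq a, inv_mul_cancel₀ (hirr.neg_trace_pos a).ne']

end MSScheme

/-! ### Packings and substitutions -/

section Packing

variable {d n : ℕ} {P : Finset (LTile d n)} {R : LTile d n → Finset (LTile d n)}

/-- The volume of a labelled tile as a real number. -/
noncomputable def LTile.vol (S : LTile d n) : ℝ :=
  (volume S.carrier).toReal

/-- A finite family of labelled tiles whose carriers overlap in null sets only. -/
structure IsPacking (P : Finset (LTile d n)) : Prop where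
  isTile : ∀ S ∈ P, IsTile S.carrier
  aedisjoint : (P : Set (LTile d n)).Pairwise fun S S' => AEDisjoint volume S.carrier S'.carrier

/-- `Refines P R`: the map `R` replaces every member of `P` by a packing inside it. -/
structure Refines (P : Finset (LTile d n)) (R : LTile d n → Finset (LTile d n)) : Prop where
  isPacking : ∀ S ∈ P, IsPacking (R S)
  subset : ∀ S ∈ P, ∀ C ∈ R S, C.carrier ⊆ S.carrier

theorem IsTile.not_aedisjoint_self {A : Set (Euc d)} (hA : IsTile A) :
    ¬ AEDisjoint volume A A := by
  rw [AEDisjoint, Set.inter_self]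
  exact hA.2.2.1.ne'

theorem isPacking_singleton {S : LTile d n} (hS : IsTile S.carrier) : IsPacking {S} where
  isTile := by simpa using hS
  aedisjoint := by simp

theorem IsPacking.toReal_volume_typeUnion (hP : IsPacking P) (r : Fin n) :
    (volume (typeUnion P r)).toReal = ∑ S ∈ P with S.type = r, S.vol := by
  have hsub : ∀ S ∈ P.filter (fun S => S.type = r), S ∈ P := fun S => Finset.mem_of_mem_filter S
  rw [typeUnion, measure_biUnion_finset₀ (hP.aedisjoint.mono hsub)
    fun S hS => (hP.isTile S (hsub S hS)).2.1]
  exact ENNReal.toReal_sum fun S hS => (hP.isTile S (hsub S hS)).1.measure_lt_top.ne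

theorem IsPacking.pairwiseDisjoint (hP : IsPacking P) (hR : Refines P R) :
    (P : Set (LTile d n)).PairwiseDisjoint R := by
  refine fun S hS S' hS' hne => Finset.disjoint_left.2 fun C hC hC' => ?_
  exact ((hR.isPacking S hS).isTile C hC).not_aedisjoint_self
    ((hP.aedisjoint hS hS' hne).mono (hR.subset S hS C hC) (hR.subset S' hS' C hC'))

theorem IsPacking.biUnion (hP : IsPacking P) (hR : Refines P R) : IsPacking (P.biUnion R) where
  isTile C hC := by
    obtain ⟨S, hS, hCS⟩ := Finset.mem_biUnion.1 hC
    exact (hR.isPacking S hS).isTile C hCS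
  aedisjoint C hC C' hC' hne := by
    obtain ⟨S, hS, hCS⟩ := Finset.mem_biUnion.1 hC
    obtain ⟨S', hS', hCS'⟩ := Finset.mem_biUnion.1 hC'
    by_cases hSS : S = S'
    · subst hSS
      exact (hR.isPacking S hS).aedisjoint hCS hCS' hne
    · exact (hP.aedisjoint hS hS' hSS).mono (hR.subset S hS C hCS) (hR.subset S' hS' C' hCS')

/-- The largest volume of a member of a finite family of labelled tiles. -/
noncomputable def maxVol (P : Finset (LTile d n)) : ℝ :=
  ⨆ S : P, S.1.vol

theorem vol_le_maxVol {S : LTile d n} (hS : S ∈ P) : S.vol ≤ maxVol P :=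
  le_ciSup (f := fun S : P => S.1.vol) (Set.finite_range _).bddAbove ⟨S, hS⟩

theorem exists_vol_eq_maxVol (hne : P.Nonempty) : ∃ S ∈ P, S.vol = maxVol P := by
  have := hne.to_subtype
  obtain ⟨S, hS⟩ := exists_eq_ciSup_of_finite (f := fun S : P => S.1.vol)
  exact ⟨S, S.2, hS⟩

theorem IsPacking.mem_maxTiles (hP : IsPacking P) {S : LTile d n} :
    S ∈ maxTiles P ↔ S ∈ P ∧ S.vol = maxVol P := by
  have hfin : ∀ S ∈ P, volume S.carrier ≠ ⊤ := fun S hS => (hP.isTile S hS).1.measure_lt_top.ne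
  classical
  rw [maxTiles, Finset.mem_filter]
  refine and_congr_right fun hS => ⟨fun h => ?_, fun h S' hS' => ?_⟩
  · have : Nonempty P := ⟨⟨S, hS⟩⟩
    exact (vol_le_maxVol hS).antisymm
      (ciSup_le fun S' => ENNReal.toReal_mono (hfin S hS) (h _ S'.2))
  · exact (ENNReal.toReal_le_toReal (hfin S' hS') (hfin S hS)).1
      ((vol_le_maxVol hS').trans_eq h.symm)

theorem IsPacking.maxVol_pos (hP : IsPacking P) (hne : P.Nonempty) : 0 < maxVol P := by
  obtain ⟨S, hS, hmax⟩ := exists_vol_eq_maxVol hne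
  exact hmax ▸ (hP.isTile S hS).toReal_volume_pos

end Packing

namespace MSScheme

variable {d n : ℕ}

/-- The family `child`, indexed by the substitution tiles of the type of `S`, cuts `S` into tiles of
the prescribed types and relative volumes. -/
structure IsSubdivision (σ : MSScheme d n) (S : LTile d n) (child : σ.Piece S.type → LTile d n) :
    Prop where
  type_eq : ∀ e, (child e).type = e.1
  isTile : ∀ e, IsTile (child e).carrier
  vol_eq : ∀ e, (child e).vol = σ.relVol S.type e * S.vol
  subset : ∀ e, (child e).carrier ⊆ S.carrier
  aedisjoint : Pairwise fun e e' => AEDisjoint volume (child e).carrier (child e').carrier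

variable {σ : MSScheme d n} {S : LTile d n} {child : σ.Piece S.type → LTile d n}

theorem exists_isSubdivision [NeZero d] {P : Finset (LTile d n)} (h : SubstitutesTo σ S P) :
    ∃ child, σ.IsSubdivision S child ∧ P = Finset.univ.image child := by
  obtain ⟨ϱ, hϱ, a, ha, φ, hS, rfl⟩ := h
  refine ⟨_, ⟨fun e => rfl, fun e => (isTile_rule hϱ _ _ _).image_smul φ ha, fun e => ?_,
    fun e => ?_, fun e e' hne => aedisjoint_image_smul φ ha (aedisjoint_rule hϱ _ hne)⟩, rfl⟩
  · rw [LTile.vol, LTile.vol, hS, toReal_volume_image_smul φ ha, toReal_volume_image_smul φ ha,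
      toReal_volume_rule hϱ, mul_left_comm]
  · rw [hS, ← σ.rules_cover ϱ hϱ S.type]
    exact Set.image_mono (Set.smul_set_mono
      (Set.subset_iUnion (fun e : σ.Piece S.type => ϱ S.type e.1 e.2) e))

namespace IsSubdivision

theorem injective (h : σ.IsSubdivision S child) : Function.Injective child := by
  refine fun e e' hee => not_not.1 fun hne => (h.isTile e).not_aedisjoint_self ?_
  exact (h.aedisjoint hne).mono subset_rfl (congrArg LTile.carrier hee).subset

theorem isPacking (h : σ.IsSubdivision S child) : IsPacking (Finset.univ.image child) where
  isTile := Finset.forall_mem_image.2 fun e _ => h.isTile e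
  aedisjoint := by
    rw [Finset.coe_image]
    rintro _ ⟨e, -, rfl⟩ _ ⟨e', -, rfl⟩ hne
    exact h.aedisjoint (ne_of_apply_ne child hne)

theorem sum_image (h : σ.IsSubdivision S child) (g : Fin n → ℝ → ℝ) :
    ∑ C ∈ Finset.univ.image child, g C.type C.vol =
      ∑ e, g e.1 (σ.relVol S.type e * S.vol) := by
  rw [Finset.sum_image h.injective.injOn]
  simp only [h.type_eq, h.vol_eq]

end IsSubdivision

theorem exists_le_relVol (σ : MSScheme d n) :
    ∃ ρ : ℝ, 0 < ρ ∧ ρ ≤ 1 ∧ ∀ i e, ρ ≤ σ.relVol i e := by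
  have hle {x : ℝ} (hx : 0 < x) : ∀ᶠ ρ in 𝓝[>] (0 : ℝ), ρ ≤ x :=
    mem_of_superset (Ioc_mem_nhdsGT hx) fun _ => And.right
  have hpos : ∀ᶠ ρ in 𝓝[>] (0 : ℝ), 0 < ρ := self_mem_nhdsWithin
  exact (hpos.and ((hle one_pos).and
    (eventually_all.2 fun i => eventually_all.2 fun e => hle (relVol_pos i e)))).exists

variable [NeZero d]

/-- A single piece would have relative volume one. -/
theorem one_lt_card_piece (σ : MSScheme d n) (i : Fin n) : 1 < Fintype.card (σ.Piece i) := by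
  have hne : (Finset.univ : Finset (σ.Piece i)).Nonempty :=
    Finset.nonempty_of_sum_ne_zero ((sum_relVol i).trans_ne one_ne_zero)
  have hlt := Finset.sum_lt_sum_of_nonempty hne fun e _ => relVol_lt_one i e
  rw [sum_relVol, Finset.sum_const, nsmul_one] at hlt
  exact_mod_cast hlt

theorem log_relVol_mul_div {ℓ v : ℝ} (hℓ : ℓ ≠ 0) (hv : v ≠ 0) (i : Fin n) (e : σ.Piece i) :
    Real.log (σ.relVol i e * v / ℓ) / d =
      Real.log (v / ℓ) / d - Real.log (1 / σ.beta i e.1 e.2) := by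
  have hd : (d : ℝ) ≠ 0 := NeZero.ne _
  rw [mul_div_assoc, Real.log_mul (relVol_pos i e).ne' (div_ne_zero hv hℓ), log_relVol]
  field_simp
  ring

/-- The renewal equation at the time needed to shrink from volume `v` to volume `ℓ`. -/
theorem sum_relVol_mul_of_solvesAfter {F : Fin n → ℝ → ℝ} (hF : σ.renewal.SolvesAfter 0 F)
    {ℓ v : ℝ} (hℓ : 0 < ℓ) (hv : ℓ < v) (j : Fin n) :
    ∑ e, σ.relVol j e * v * F e.1 (Real.log (σ.relVol j e * v / ℓ) / d) =
      v * F j (Real.log (v / ℓ) / d) := by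
  have ht : 0 < Real.log (v / ℓ) / d :=
    div_pos (Real.log_pos ((one_lt_div hℓ).2 hv)) (Nat.cast_pos.2 (NeZero.pos d))
  rw [hF _ ht j, RenewalSystem.step, RenewalSystem.mean, Finset.mul_sum]
  refine Finset.sum_congr rfl fun e _ => ?_
  rw [log_relVol_mul_div hℓ.ne' (hℓ.trans hv).ne', mul_comm _ v, mul_assoc]
  rfl

end MSScheme

/-! ### Kakutani sequences -/

namespace IsKakutaniSeq

variable {d n : ℕ} [NeZero d] {σ : MSScheme d n} {i : Fin n} {π : ℕ → Finset (LTile d n)}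

theorem exists_refines (hπ : IsKakutaniSeq σ i π) {m : ℕ} (hP : IsPacking (π m)) :
    ∃ R, Refines (π m) R ∧ π (m + 1) = (π m).biUnion R ∧
      (∀ S ∈ maxTiles (π m), ∃ child, σ.IsSubdivision S child ∧ R S = Finset.univ.image child) ∧
      ∀ S ∉ maxTiles (π m), R S = {S} := by
  classical
  obtain ⟨repl, hrepl, hstep⟩ := hπ.2 m
  have hsub : maxTiles (π m) ⊆ π m := fun S hS => (hP.mem_maxTiles.1 hS).1
  replace hrepl := fun S hS => MSScheme.exists_isSubdivision (hrepl S hS)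
  refine ⟨fun S => if S ∈ maxTiles (π m) then repl S else {S}, ⟨fun S hS => ?_, fun S _ C hC => ?_⟩,
    ?_, fun S hS => by simpa only [if_pos hS] using hrepl S hS, fun S hS => if_neg hS⟩
  · split_ifs with hmax
    · obtain ⟨child, hchild, h⟩ := hrepl S hmax
      exact h ▸ hchild.isPacking
    · exact isPacking_singleton (hP.isTile S hS)
  · split_ifs at hC with hmax
    · obtain ⟨child, hchild, h⟩ := hrepl S hmax
      obtain ⟨e, -, rfl⟩ := Finset.mem_image.1 (h ▸ hC)
      exact hchild.subset e
    · rw [Finset.mem_singleton.1 hC]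
  · rw [hstep]
    ext C
    grind

theorem isPacking (hπ : IsKakutaniSeq σ i π) (m : ℕ) : IsPacking (π m) := by
  induction m with
  | zero => exact hπ.1 ▸ isPacking_singleton (σ.tile i)
  | succ m ih =>
    obtain ⟨R, hR, hstep, -, -⟩ := hπ.exists_refines ih
    exact hstep ▸ ih.biUnion hR

theorem sum_succ_of_conserved (hπ : IsKakutaniSeq σ i π) {m : ℕ} {g : Fin n → ℝ → ℝ}
    (hg : ∀ j, ∑ e, g e.1 (σ.relVol j e * maxVol (π m)) = g j (maxVol (π m))) :
    ∑ S ∈ π (m + 1), g S.type S.vol = ∑ S ∈ π m, g S.type S.vol := by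
  obtain ⟨R, hR, hstep, hmax, hrest⟩ := hπ.exists_refines (hπ.isPacking m)
  rw [hstep, Finset.sum_biUnion ((hπ.isPacking m).pairwiseDisjoint hR)]
  refine Finset.sum_congr rfl fun S _ => ?_
  by_cases hS : S ∈ maxTiles (π m)
  · obtain ⟨child, hchild, h⟩ := hmax S hS
    rw [h, hchild.sum_image, ((hπ.isPacking m).mem_maxTiles.1 hS).2, hg]
  · rw [hrest S hS, Finset.sum_singleton]

theorem sum_vol (hπ : IsKakutaniSeq σ i π) (m : ℕ) :
    ∑ S ∈ π m, S.vol = (volume (σ.T i)).toReal := by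
  induction m with
  | zero => rw [hπ.1, Finset.sum_singleton, LTile.vol]
  | succ m ih =>
    rw [← ih]
    refine hπ.sum_succ_of_conserved (g := fun _ v => v) fun j => ?_
    rw [← Finset.sum_mul, MSScheme.sum_relVol, one_mul]

theorem nonempty (hπ : IsKakutaniSeq σ i π) (m : ℕ) : (π m).Nonempty :=
  Finset.nonempty_of_sum_ne_zero ((hπ.sum_vol m).trans_ne (σ.tile i).toReal_volume_pos.ne')

theorem maxVol_pos (hπ : IsKakutaniSeq σ i π) (m : ℕ) : 0 < maxVol (π m) :=
  (hπ.isPacking m).maxVol_pos (hπ.nonempty m)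

theorem mem_or_exists_of_mem_succ (hπ : IsKakutaniSeq σ i π) {m : ℕ} {S : LTile d n}
    (hS : S ∈ π (m + 1)) :
    (S ∈ π m ∧ S.vol < maxVol (π m)) ∨ ∃ j e, S.vol = σ.relVol j e * maxVol (π m) := by
  have hP := hπ.isPacking m
  obtain ⟨R, -, hstep, hmax, hrest⟩ := hπ.exists_refines hP
  obtain ⟨S', hS', hSS'⟩ := Finset.mem_biUnion.1 (hstep ▸ hS)
  by_cases hmem : S' ∈ maxTiles (π m)
  · obtain ⟨child, hchild, h⟩ := hmax S' hmem
    obtain ⟨e, -, rfl⟩ := Finset.mem_image.1 (h ▸ hSS')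
    exact Or.inr ⟨_, e, (hP.mem_maxTiles.1 hmem).2 ▸ hchild.vol_eq e⟩
  · obtain rfl : S = S' := Finset.mem_singleton.1 (hrest S' hmem ▸ hSS')
    exact Or.inl ⟨hS', (vol_le_maxVol hS').lt_of_ne fun h => hmem (hP.mem_maxTiles.2 ⟨hS', h⟩)⟩

theorem strictAnti_maxVol (hπ : IsKakutaniSeq σ i π) : StrictAnti fun m => maxVol (π m) := by
  refine strictAnti_nat_of_succ_lt fun m => ?_
  obtain ⟨S, hS, hmax⟩ := exists_vol_eq_maxVol (hπ.nonempty (m + 1))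
  rw [← hmax]
  obtain ⟨-, hlt⟩ | ⟨j, e, he⟩ := hπ.mem_or_exists_of_mem_succ hS
  · exact hlt
  · exact he ▸ mul_lt_of_lt_one_left (hπ.maxVol_pos m) (MSScheme.relVol_lt_one j e)

theorem mul_maxVol_le_vol (hπ : IsKakutaniSeq σ i π) {ρ : ℝ} (hρ₀ : 0 ≤ ρ) (hρ₁ : ρ ≤ 1)
    (hρ : ∀ j e, ρ ≤ σ.relVol j e) (m : ℕ) : ∀ S ∈ π m, ρ * maxVol (π m) ≤ S.vol := by
  induction m with
  | zero =>
    intro S hS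
    obtain ⟨S', hS', hmax⟩ := exists_vol_eq_maxVol (hπ.nonempty 0)
    rw [hπ.1, Finset.mem_singleton] at hS hS'
    rw [← hmax, hS, hS']
    exact mul_le_of_le_one_left ENNReal.toReal_nonneg hρ₁
  | succ m ih =>
    intro S hS
    have hanti := mul_le_mul_of_nonneg_left (hπ.strictAnti_maxVol m.lt_succ_self).le hρ₀
    obtain ⟨hmem, -⟩ | ⟨j, e, he⟩ := hπ.mem_or_exists_of_mem_succ hS
    · exact hanti.trans (ih S hmem)
    · exact hanti.trans (he ▸ mul_le_mul_of_nonneg_right (hρ j e) (hπ.maxVol_pos m).le)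

theorem strictMono_card (hπ : IsKakutaniSeq σ i π) : StrictMono fun m => (π m).card := by
  refine strictMono_nat_of_lt_succ fun m => ?_
  have hP := hπ.isPacking m
  obtain ⟨R, hR, hstep, hmax, hrest⟩ := hπ.exists_refines hP
  have hone : ∀ S ∈ maxTiles (π m), 1 < (R S).card := fun S hS => by
    obtain ⟨child, hchild, h⟩ := hmax S hS
    rw [h, Finset.card_image_of_injective _ hchild.injective]
    exact σ.one_lt_card_piece _
  rw [hstep, Finset.card_biUnion (hP.pairwiseDisjoint hR), Finset.card_eq_sum_ones]
  obtain ⟨S₀, hS₀, hS₀max⟩ := exists_vol_eq_maxVol (hπ.nonempty m)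
  refine Finset.sum_lt_sum (fun S _ => ?_) ⟨S₀, hS₀, hone S₀ (hP.mem_maxTiles.2 ⟨hS₀, hS₀max⟩)⟩
  by_cases hS : S ∈ maxTiles (π m)
  · exact (hone S hS).le
  · rw [hrest S hS, Finset.card_singleton]

/-- The tiles of `π m` have comparable volumes and their number is unbounded. -/
theorem tendsto_div_maxVol (hπ : IsKakutaniSeq σ i π) :
    Tendsto (fun m => (volume (σ.T i)).toReal / maxVol (π m)) atTop atTop := by
  obtain ⟨ρ, hρ₀, hρ₁, hρ⟩ := σ.exists_le_relVol
  refine tendsto_atTop_mono (fun m => ?_) (tendsto_natCast_atTop_atTop.const_mul_atTop hρ₀)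
  rw [le_div_iff₀ (hπ.maxVol_pos m)]
  calc ρ * m * maxVol (π m) = m * (ρ * maxVol (π m)) := by ring
    _ ≤ (π m).card * (ρ * maxVol (π m)) :=
      mul_le_mul_of_nonneg_right (Nat.cast_le.2 (hπ.strictMono_card.le_apply))
        (mul_pos hρ₀ (hπ.maxVol_pos m)).le
    _ ≤ ∑ S ∈ π m, S.vol := by
      rw [← nsmul_eq_mul]
      exact Finset.card_nsmul_le_sum _ _ _ (hπ.mul_maxVol_le_vol hρ₀.le hρ₁ hρ m)
    _ = (volume (σ.T i)).toReal := hπ.sum_vol m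

/-- Every substituted tile is larger than `ℓ`, so the renewal equation makes its pieces contribute
as much as the tile itself. -/
theorem sum_vol_mul_of_solvesAfter (hπ : IsKakutaniSeq σ i π) {F : Fin n → ℝ → ℝ}
    (hF : σ.renewal.SolvesAfter 0 F) {ℓ : ℝ} (hℓ : 0 < ℓ) {m : ℕ}
    (hm : ∀ k < m, ℓ < maxVol (π k)) :
    ∑ S ∈ π m, S.vol * F S.type (Real.log (S.vol / ℓ) / d) =
      (volume (σ.T i)).toReal * F i (Real.log ((volume (σ.T i)).toReal / ℓ) / d) := by
  induction m with
  | zero => rw [hπ.1, Finset.sum_singleton, LTile.vol]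
  | succ m ih =>
    rw [← ih fun k hk => hm k (hk.trans m.lt_succ_self)]
    exact hπ.sum_succ_of_conserved (g := fun j v => v * F j (Real.log (v / ℓ) / d)) fun j =>
      MSScheme.sum_relVol_mul_of_solvesAfter hF hℓ (hm m m.lt_succ_self) j

theorem sum_vol_mul_eq_firstPassage (hπ : IsKakutaniSeq σ i π) (c : Fin n → ℝ) (m : ℕ) :
    ∑ S ∈ π m, S.vol * c S.type = (volume (σ.T i)).toReal *
      σ.renewal.firstPassage c i (Real.log ((volume (σ.T i)).toReal / maxVol (π m)) / d) := by
  have hℓ := hπ.maxVol_pos m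
  rw [← hπ.sum_vol_mul_of_solvesAfter (σ.renewal.solvesAfter_firstPassage c) hℓ
    fun k hk => hπ.strictAnti_maxVol hk]
  refine Finset.sum_congr rfl fun S hS => ?_
  have hlog : Real.log (S.vol / maxVol (π m)) ≤ 0 :=
    Real.log_nonpos (div_nonneg ENNReal.toReal_nonneg hℓ.le)
      (div_le_one_of_le₀ (vol_le_maxVol hS) hℓ.le)
  rw [σ.renewal.firstPassage_of_nonpos c _ (div_nonpos_of_nonpos_of_nonneg hlog d.cast_nonneg)]

theorem tendsto_sum_vol_mul (hπ : IsKakutaniSeq σ i π) (hirr : σ.Irreducible)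
    (hinc : σ.Incommensurable) (c : Fin n → ℝ) :
    Tendsto (fun m => ∑ S ∈ π m, S.vol * c S.type) atTop
      (𝓝 ((volume (σ.T i)).toReal * ∑ h, Qmat σ i h *
        σ.renewal.mean h fun e => Real.log (1 / σ.beta h e.1 e.2) * c e.1)) := by
  have htime := (Real.tendsto_log_atTop.comp hπ.tendsto_div_maxVol).atTop_div_const
    (Nat.cast_pos.2 (NeZero.pos d) : (0 : ℝ) < d)
  simp only [hπ.sum_vol_mul_eq_firstPassage c]
  exact ((RenewalSystem.tendsto_firstPassage (hinc.hasDensePathLengths hirr)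
    (hirr.isStationary_Qmat_row i) c i).comp htime).const_mul _

end IsKakutaniSeq

theorem MSScheme.mean_log_mul_single {d n : ℕ} [NeZero d] (σ : MSScheme d n) (h r : Fin n) :
    (σ.renewal.mean h fun e =>
      Real.log (1 / σ.beta h e.1 e.2) * (Pi.single r 1 : Fin n → ℝ) e.1) =
      ∑ k, σ.beta h r k ^ d * Real.log (1 / σ.beta h r k) := by
  rw [RenewalSystem.mean, Fintype.sum_sigma, Fintype.sum_eq_single r]
  · simp only [Pi.single_eq_same, mul_one]
    rfl
  · intro j hj
    simp only [Pi.single_eq_of_ne hj, mul_zero, Finset.sum_const_zero]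

/-- **Theorem 1.11 (3).** For an irreducible incommensurable multiscale substitution
scheme, the matrix `Q_σ` has positive entries and equal rows, and in any Kakutani
sequence of partitions of `T i`, the volume of the region covered by tiles of type `r`
in `π_m` converges to `vol T_i · Σ_h q_h Σ_k ((β_hr^(k))^d · log (1/β_hr^(k)))`. -/
theorem type_volume_kakutani {d n : ℕ} (σ : MSScheme d n)
    (hirr : σ.Irreducible) (hinc : σ.Incommensurable) (i : Fin n)
    (π : ℕ → Finset (LTile d n)) (hπ : IsKakutaniSeq σ i π) (r : Fin n) :
    (∀ a b : Fin n, 0 < Qmat σ a b) ∧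
    (∀ a b c : Fin n, Qmat σ a c = Qmat σ b c) ∧
    Tendsto (fun m => (volume (typeUnion (π m) r)).toReal) atTop
      (𝓝 ((volume (σ.T i)).toReal *
          ∑ h : Fin n, Qmat σ i h *
            ∑ k : Fin (σ.numSub h r), σ.beta h r k ^ d * Real.log (1 / σ.beta h r k))) := by
  have : NeZero d := ⟨hinc.dim_ne_zero⟩
  refine ⟨hirr.Qmat_pos, fun a b c => congrFun (hirr.Qmat_row_eq a b) c, ?_⟩
  have hvol (m : ℕ) : (volume (typeUnion (π m) r)).toReal =
      ∑ S ∈ π m, S.vol * (Pi.single r 1 : Fin n → ℝ) S.type := by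
    simp only [(hπ.isPacking m).toReal_volume_typeUnion, Finset.sum_filter, Pi.single_apply,
      mul_ite, mul_one, mul_zero]
  simp only [hvol, ← σ.mean_log_mul_single]
  exact hπ.tendsto_sum_vol_mul hirr hinc (Pi.single r 1)
end

section
/- Let σ be a multiscale substitution scheme in ℝ^d and let {γ_m} be either a Kakutani sequence or a generation sequence of partitions of a prototile T_i ∈ τ_σ. Then for every ε > 0 there exists m_0 ∈ ℕ such that for all m ≥ m_0, every tile in the partition γ_m has diameter less than ε. -/
/-!
Each tile is the image of a prototile under a similarity of `ℝ^d`, so the `d`-th power of its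
diameter is at most a constant times its volume, and it suffices that the maximal volume tends to
zero. Every piece of a substituted tile has at most `c` times its volume, for some `c < 1` that
depends only on the scheme.

Suppose that all volumes are at most `M`. As long as some tile has volume greater than `c * M`, the
tiles of maximal volume have, too, and their pieces have volume at most `c * M`. So each step
strictly decreases the finite set of tiles of volume greater than `c * M`, which is therefore empty
after finitely many steps, and the argument restarts with `c * M` in place of `M`. It needs only
that each step substitutes at least the tiles of maximal volume, and so covers Kakutani and
generation sequences alike.
-/

open MeasureTheory Filter Topology
open scoped Pointwise

section ContractingSteps

variable {α 𝕜 : Type*}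

/-- `Q` arises from the finite collection `P` by removing at least the elements at which the size
`f` is maximal, and adding elements of size at most `c` times that of some element of `P`. -/
def IsContractingStep [Mul 𝕜] [Preorder 𝕜] (f : α → 𝕜) (c : 𝕜) (P Q : Finset α) : Prop :=
  ∀ y ∈ Q, (y ∈ P ∧ ∃ x ∈ P, f y < f x) ∨ ∃ x ∈ P, f y ≤ c * f x

section Semiring

variable [Semiring 𝕜] [LinearOrder 𝕜] [IsOrderedRing 𝕜] {f : α → 𝕜} {c M : 𝕜}

theorem IsContractingStep.forall_le {P Q : Finset α} (h : IsContractingStep f c P Q) (hc₀ : 0 ≤ c)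
    (hc₁ : c ≤ 1) (hM : 0 ≤ M) (hP : ∀ x ∈ P, f x ≤ M) : ∀ y ∈ Q, f y ≤ M := by
  intro y hy
  obtain ⟨hyP, -⟩ | ⟨x, hx, hyx⟩ := h y hy
  · exact hP y hyP
  · calc
      f y ≤ c * f x := hyx
      _ ≤ c * M := mul_le_mul_of_nonneg_left (hP x hx) hc₀
      _ ≤ M := mul_le_of_le_one_left hM hc₁

theorem IsContractingStep.filter_mul_lt_ssubset {P Q : Finset α} (h : IsContractingStep f c P Q)
    (hc₀ : 0 ≤ c) (hP : ∀ x ∈ P, f x ≤ M) (hne : {x ∈ P | c * M < f x}.Nonempty) :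
    {y ∈ Q | c * M < f y} ⊂ {x ∈ P | c * M < f x} := by
  have large_of_mem {y : α} (hy : y ∈ Q) (hlt : c * M < f y) : y ∈ P ∧ ∃ x ∈ P, f y < f x :=
    (h y hy).resolve_right fun ⟨x, hx, hyx⟩ =>
      (hyx.trans (mul_le_mul_of_nonneg_left (hP x hx) hc₀)).not_gt hlt
  obtain ⟨w, hw, hwlt⟩ := Finset.filter_nonempty_iff.1 hne
  obtain ⟨z, hz, hmax⟩ := P.exists_max_image f ⟨w, hw⟩
  have hzlt : c * M < f z := hwlt.trans_le (hmax w hw)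
  refine Finset.ssubset_iff_subset_ne.2 ⟨fun y hy => ?_, fun heq => ?_⟩
  · obtain ⟨hyQ, hlt⟩ := Finset.mem_filter.1 hy
    exact Finset.mem_filter.2 ⟨(large_of_mem hyQ hlt).1, hlt⟩
  · have hzQ : z ∈ Q := (Finset.mem_filter.1 (heq ▸ Finset.mem_filter.2 ⟨hz, hzlt⟩)).1
    obtain ⟨-, x, hx, hzx⟩ := large_of_mem hzQ hzlt
    exact (hmax x hx).not_gt hzx

variable {P : ℕ → Finset α}

theorem exists_forall_le_mul_of_contracting (h : ∀ m, IsContractingStep f c (P m) (P (m + 1)))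
    (hc₀ : 0 ≤ c) (hc₁ : c ≤ 1) (hM : 0 ≤ M) {m : ℕ} (hm : ∀ x ∈ P m, f x ≤ M) :
    ∃ k, ∀ x ∈ P k, f x ≤ c * M := by
  induction hs : {x ∈ P m | c * M < f x} using Finset.strongInduction generalizing m with
  | H s ih =>
    obtain rfl | hne := s.eq_empty_or_nonempty
    · exact ⟨m, fun x hx => not_lt.1 (Finset.filter_eq_empty_iff.1 hs hx)⟩
    · subst hs
      exact ih _ ((h m).filter_mul_lt_ssubset hc₀ hm hne) ((h m).forall_le hc₀ hc₁ hM hm) rfl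

theorem exists_forall_le_pow_mul_of_contracting (h : ∀ m, IsContractingStep f c (P m) (P (m + 1)))
    (hc₀ : 0 ≤ c) (hc₁ : c ≤ 1) (hM : 0 ≤ M) (h₀ : ∀ x ∈ P 0, f x ≤ M) (n : ℕ) :
    ∃ k, ∀ x ∈ P k, f x ≤ c ^ n * M := by
  induction n with
  | zero => exact ⟨0, by simpa using h₀⟩
  | succ n ih =>
    obtain ⟨k, hk⟩ := ih
    rw [pow_succ', mul_assoc]
    exact exists_forall_le_mul_of_contracting h hc₀ hc₁ (mul_nonneg (pow_nonneg hc₀ n) hM) hk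

end Semiring

theorem exists_forall_ge_forall_lt_of_contracting [Semifield 𝕜] [LinearOrder 𝕜]
    [IsStrictOrderedRing 𝕜] [ExistsAddOfLE 𝕜] [Archimedean 𝕜] {f : α → 𝕜} {c δ : 𝕜}
    {P : ℕ → Finset α} (h : ∀ m, IsContractingStep f c (P m) (P (m + 1))) (hc₀ : 0 ≤ c)
    (hc₁ : c < 1) (hδ : 0 < δ) : ∃ m₀, ∀ m ≥ m₀, ∀ x ∈ P m, f x < δ := by
  obtain ⟨M, hM, hPM⟩ := ((P 0).finite_toSet.image f).bddAbove.exists_ge 0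
  obtain ⟨η, hη, hMη⟩ := exists_pos_mul_lt hδ M
  obtain ⟨n, hn⟩ := exists_pow_lt_of_lt_one hη hc₁
  have hcM : 0 ≤ c ^ n * M := mul_nonneg (pow_nonneg hc₀ n) hM
  have hlt : c ^ n * M < δ := by
    rw [mul_comm]
    exact (mul_le_mul_of_nonneg_left hn.le hM).trans_lt hMη
  obtain ⟨k, hk⟩ := exists_forall_le_pow_mul_of_contracting h hc₀ hc₁.le hM
    (Set.forall_mem_image.1 hPM) n
  have hk' (m : ℕ) (hm : k ≤ m) : ∀ x ∈ P m, f x ≤ c ^ n * M := by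
    induction m, hm using Nat.le_induction with
    | base => exact hk
    | succ m _ ih => exact (h m).forall_le hc₀ hc₁.le hcM ih
  exact ⟨k, fun m hm x hx => (hk' m hm x hx).trans_lt hlt⟩

end ContractingSteps

section Dilations

open scoped ENNReal

theorem hausdorffMeasure_image_dilation {X Y F : Type*} [EMetricSpace X] [EMetricSpace Y]
    [MeasurableSpace X] [BorelSpace X] [MeasurableSpace Y] [BorelSpace Y] [FunLike F X Y]
    [DilationClass F X Y] (f : F) {p : ℝ} (hp : 0 ≤ p) (s : Set X) :
    μH[p] (f '' s) = (Dilation.ratio f : ℝ≥0∞) ^ p * μH[p] s := by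
  refine ((Dilation.lipschitz f).hausdorffMeasure_image_le hp s).antisymm ?_
  have hr : (Dilation.ratio f : ℝ≥0∞) ^ p ≠ 0 :=
    (ENNReal.rpow_pos (ENNReal.coe_pos.2 (Dilation.ratio_pos f)) ENNReal.coe_ne_top).ne'
  have hr' : (Dilation.ratio f : ℝ≥0∞) ^ p ≠ ∞ :=
    ENNReal.rpow_ne_top_of_nonneg hp ENNReal.coe_ne_top
  have hle := (Dilation.antilipschitz f).le_hausdorffMeasure_image hp s
  rw [ENNReal.coe_inv (Dilation.ratio_ne_zero f), ENNReal.inv_rpow] at hle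
  exact (ENNReal.mul_le_iff_le_inv hr hr').2 hle

variable {E : Type*} [NormedAddCommGroup E] [NormedSpace ℝ E]

theorem exists_dilationEquiv_image_eq_image_smul (φ : E ≃ᵢ E) {a : ℝ} (ha : a ≠ 0) :
    ∃ f : E ≃ᵈ E, ∀ s : Set E, φ '' (a • s) = f '' s := by
  refine ⟨(DilationEquiv.smulTorsor 0 ha).trans φ.toDilationEquiv, fun s => ?_⟩
  have hsmul (x : E) : DilationEquiv.smulTorsor 0 ha x = a • x := add_zero _
  simp [← Set.image_smul, Set.image_image, hsmul]

variable [FiniteDimensional ℝ E] [MeasurableSpace E] [BorelSpace E] (μ : Measure E)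
  [μ.IsAddHaarMeasure]

theorem addHaar_image_dilation {F : Type*} [FunLike F E E] [DilationClass F E E] (f : F)
    (s : Set E) :
    μ (f '' s) = (Dilation.ratio f : ℝ≥0∞) ^ Module.finrank ℝ E * μ s := by
  rw [Measure.isAddLeftInvariant_eq_smul μ μH[Module.finrank ℝ E]]
  simp only [Measure.smul_apply, hausdorffMeasure_image_dilation f (Nat.cast_nonneg _),
    ENNReal.rpow_natCast, mul_smul_comm]

theorem addHaar_real_image_dilation {F : Type*} [FunLike F E E] [DilationClass F E E] (f : F)
    (s : Set E) :
    μ.real (f '' s) = (Dilation.ratio f : ℝ) ^ Module.finrank ℝ E * μ.real s := by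
  simp [measureReal_def, addHaar_image_dilation]

theorem addHaar_real_image_isometryEquiv_smul (φ : E ≃ᵢ E) (a : ℝ) (s : Set E) :
    μ.real (φ '' (a • s)) = |a ^ Module.finrank ℝ E| * μ.real s := by
  have hφ : μ.real (φ '' (a • s)) = μ.real (a • s) := by
    simpa using addHaar_real_image_dilation μ φ.toDilationEquiv (a • s)
  rw [hφ, measureReal_def, Measure.addHaar_smul, ENNReal.toReal_mul,
    ENNReal.toReal_ofReal (abs_nonneg _), measureReal_def]

end Dilations

section Substitution

open scoped ENNReal

variable {d n : ℕ} {σ : MSScheme d n}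

theorem MSScheme.volume_ne_top (σ : MSScheme d n) (i : Fin n) : volume (σ.T i) ≠ ∞ :=
  (σ.tile i).1.measure_lt_top.ne

theorem MSScheme.volume_real_pos (σ : MSScheme d n) (i : Fin n) : 0 < volume.real (σ.T i) :=
  ENNReal.toReal_pos (σ.tile i).2.2.1.ne' (σ.volume_ne_top i)

theorem MSScheme.exists_forall_beta_le (σ : MSScheme d n) :
    ∃ c : ℝ, 0 ≤ c ∧ c < 1 ∧ ∀ i j k, σ.beta i j k ≤ c := by
  have hβ : ∀ᶠ c in 𝓝[<] (1 : ℝ), ∀ i j k, σ.beta i j k ≤ c := by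
    simp only [eventually_all]
    exact fun i j k => mem_of_superset (Ioo_mem_nhdsLT (σ.beta_lt_one i j k)) fun c hc => hc.1.le
  obtain ⟨c, hc, hc₀, hc₁⟩ := (hβ.and (Ico_mem_nhdsLT one_pos)).exists
  exact ⟨c, hc₀, hc₁, hc⟩

theorem MSScheme.volume_real_rule (hd : d ≠ 0)
    {ϱ : (i j : Fin n) → Fin (σ.numSub i j) → Set (Euc d)} (hϱ : ϱ ∈ σ.rules) (i j : Fin n)
    (k : Fin (σ.numSub i j)) :
    volume.real (ϱ i j k) = σ.beta i j k ^ d * volume.real (σ.T i) := by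
  obtain ⟨ψ, hψ⟩ := σ.rules_iso ϱ hϱ i j k
  have hβ : σ.beta i j k ^ d =
      volume.real (σ.T j) / volume.real (σ.T i) * σ.scale i j k ^ d := by
    rw [MSScheme.beta, mul_pow, one_div, Real.rpow_inv_natCast_pow (by positivity) hd]
    rfl
  have hϱT : volume.real (ϱ i j k) = σ.scale i j k ^ d * volume.real (σ.T j) := by
    rw [hψ, addHaar_real_image_isometryEquiv_smul, finrank_euclideanSpace_fin,
      abs_of_pos (pow_pos (σ.scale_pos i j k) d)]
  rw [hβ, hϱT]
  field_simp [(σ.volume_real_pos i).ne']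

/-- `S` is a rescaled isometric copy of the prototile of its type: its image under a similarity of
`ℝ^d`. -/
def IsRescaledCopy (σ : MSScheme d n) (S : LTile d n) : Prop :=
  ∃ f : Euc d ≃ᵈ Euc d, S.carrier = f '' σ.T S.type

theorem isRescaledCopy_prototile (σ : MSScheme d n) (i : Fin n) : IsRescaledCopy σ ⟨σ.T i, i⟩ :=
  ⟨DilationEquiv.refl _, (Set.image_id _).symm⟩

theorem IsRescaledCopy.volume_ne_top {S : LTile d n} (h : IsRescaledCopy σ S) :
    volume S.carrier ≠ ∞ := by
  obtain ⟨f, hf⟩ := h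
  rw [hf, addHaar_image_dilation]
  exact ENNReal.mul_ne_top (ENNReal.pow_ne_top ENNReal.coe_ne_top) (σ.volume_ne_top _)

theorem IsRescaledCopy.diam_pow_mul_volume_real {S : LTile d n} (h : IsRescaledCopy σ S) :
    Metric.diam S.carrier ^ d * volume.real (σ.T S.type) =
      Metric.diam (σ.T S.type) ^ d * volume.real S.carrier := by
  obtain ⟨f, hf⟩ := h
  rw [hf, Dilation.diam_image, addHaar_real_image_dilation, finrank_euclideanSpace_fin]
  ring

theorem MSScheme.exists_diam_pow_le_mul_volume_real (σ : MSScheme d n) :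
    ∃ C : ℝ, 0 ≤ C ∧ ∀ S, IsRescaledCopy σ S →
      Metric.diam S.carrier ^ d ≤ C * volume.real S.carrier := by
  obtain ⟨C, hC₀, hC⟩ := (Set.finite_range fun j =>
    Metric.diam (σ.T j) ^ d / volume.real (σ.T j)).bddAbove.exists_ge 0
  refine ⟨C, hC₀, fun S hS => ?_⟩
  calc
    Metric.diam S.carrier ^ d =
        Metric.diam (σ.T S.type) ^ d / volume.real (σ.T S.type) * volume.real S.carrier := by
      rw [div_mul_eq_mul_div, eq_div_iff (σ.volume_real_pos _).ne', hS.diam_pow_mul_volume_real]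
    _ ≤ C * volume.real S.carrier :=
      mul_le_mul_of_nonneg_right (Set.forall_mem_range.1 hC _) measureReal_nonneg

theorem SubstitutesTo.exists_dilationEquiv {S : LTile d n} {P : Finset (LTile d n)}
    (h : SubstitutesTo σ S P) : ∃ ϱ ∈ σ.rules, ∃ f : Euc d ≃ᵈ Euc d,
      S.carrier = f '' σ.T S.type ∧ ∀ S' ∈ P, ∃ k, S'.carrier = f '' ϱ S.type S'.type k := by
  obtain ⟨ϱ, hϱ, a, ha, φ, hS, rfl⟩ := h
  obtain ⟨f, hf⟩ := exists_dilationEquiv_image_eq_image_smul φ ha.ne'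
  refine ⟨ϱ, hϱ, f, hS.trans (hf _), Finset.forall_mem_image.2 ?_⟩
  exact fun p _ => ⟨p.2, hf _⟩

theorem SubstitutesTo.isRescaledCopy {S S' : LTile d n} {P : Finset (LTile d n)}
    (h : SubstitutesTo σ S P) (hS' : S' ∈ P) : IsRescaledCopy σ S' := by
  obtain ⟨ϱ, hϱ, f, -, hP⟩ := h.exists_dilationEquiv
  obtain ⟨k, hk⟩ := hP S' hS'
  obtain ⟨ψ, hψ⟩ := σ.rules_iso ϱ hϱ S.type S'.type k
  obtain ⟨g, hg⟩ := exists_dilationEquiv_image_eq_image_smul ψ (σ.scale_pos _ _ k).ne'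
  exact ⟨g.trans f, by rw [hk, hψ, hg, Set.image_image]; rfl⟩

theorem SubstitutesTo.exists_volume_real_eq (hd : d ≠ 0) {S S' : LTile d n}
    {P : Finset (LTile d n)} (h : SubstitutesTo σ S P) (hS' : S' ∈ P) :
    ∃ k, volume.real S'.carrier = σ.beta S.type S'.type k ^ d * volume.real S.carrier := by
  obtain ⟨ϱ, hϱ, f, hS, hP⟩ := h.exists_dilationEquiv
  obtain ⟨k, hk⟩ := hP S' hS'
  exact ⟨k, by rw [hk, hS, addHaar_real_image_dilation, addHaar_real_image_dilation,
    MSScheme.volume_real_rule hd hϱ, mul_left_comm]⟩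

/-- A sequence of finite collections of rescaled copies of prototiles, in each step of which a set
of tiles containing all those of maximal volume is substituted. This is the common generalization
of Kakutani sequences (only the tiles of maximal volume) and generation sequences (all tiles). -/
def IsMaxSubstitutionSeq (σ : MSScheme d n) (γ : ℕ → Finset (LTile d n)) : Prop :=
  (∀ S ∈ γ 0, IsRescaledCopy σ S) ∧
  ∀ m, ∃ A ⊆ γ m, maxTiles (γ m) ⊆ A ∧ ∃ repl : LTile d n → Finset (LTile d n),
    (∀ S ∈ A, SubstitutesTo σ S (repl S)) ∧ γ (m + 1) = (γ m \ A) ∪ A.biUnion repl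

theorem maxTiles_subset (P : Finset (LTile d n)) : maxTiles P ⊆ P :=
  Finset.filter_subset _ _

theorem IsKakutaniSeq.isMaxSubstitutionSeq {i : Fin n} {γ : ℕ → Finset (LTile d n)}
    (h : IsKakutaniSeq σ i γ) : IsMaxSubstitutionSeq σ γ :=
  ⟨by simpa [h.1] using isRescaledCopy_prototile σ i,
    fun m => ⟨maxTiles (γ m), maxTiles_subset _, subset_rfl, h.2 m⟩⟩

theorem IsGenSeq.isMaxSubstitutionSeq {i : Fin n} {γ : ℕ → Finset (LTile d n)}
    (h : IsGenSeq σ i γ) : IsMaxSubstitutionSeq σ γ :=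
  ⟨by simpa [h.1] using isRescaledCopy_prototile σ i,
    fun m => ⟨γ m, subset_rfl, maxTiles_subset _, by simpa using h.2 m⟩⟩

namespace IsMaxSubstitutionSeq

variable {γ : ℕ → Finset (LTile d n)}

theorem isRescaledCopy (h : IsMaxSubstitutionSeq σ γ) (m : ℕ) :
    ∀ S ∈ γ m, IsRescaledCopy σ S := by
  induction m with
  | zero => exact h.1
  | succ m ih =>
    obtain ⟨A, -, -, repl, hrepl, hγ⟩ := h.2 m
    intro S hS
    rw [hγ, Finset.mem_union, Finset.mem_biUnion] at hS
    obtain hS | ⟨S₀, hS₀, hS⟩ := hS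
    · exact ih S (Finset.mem_sdiff.1 hS).1
    · exact (hrepl S₀ hS₀).isRescaledCopy hS

theorem isContractingStep (h : IsMaxSubstitutionSeq σ γ) (hd : d ≠ 0) {c : ℝ}
    (hc : ∀ i j k, σ.beta i j k ^ d ≤ c) (m : ℕ) :
    IsContractingStep (fun S : LTile d n => volume.real S.carrier) c (γ m) (γ (m + 1)) := by
  obtain ⟨A, hA, hmax, repl, hrepl, hγ⟩ := h.2 m
  intro S hS
  rw [hγ, Finset.mem_union, Finset.mem_biUnion] at hS
  obtain hS | ⟨S₀, hS₀, hS⟩ := hS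
  · obtain ⟨hSm, hSA⟩ := Finset.mem_sdiff.1 hS
    have hnot : ¬∀ S' ∈ γ m, volume S'.carrier ≤ volume S.carrier := fun hle =>
      hSA (hmax (Finset.mem_filter.2 ⟨hSm, hle⟩))
    push Not at hnot
    obtain ⟨S', hS', hlt⟩ := hnot
    exact .inl ⟨hSm, S', hS',
      ENNReal.toReal_strict_mono (h.isRescaledCopy m S' hS').volume_ne_top hlt⟩
  · obtain ⟨k, hk⟩ := (hrepl S₀ hS₀).exists_volume_real_eq hd hS
    exact .inr ⟨S₀, hA hS₀,
      hk.trans_le (mul_le_mul_of_nonneg_right (hc _ _ k) measureReal_nonneg)⟩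

theorem exists_forall_volume_real_lt (h : IsMaxSubstitutionSeq σ γ) (hd : d ≠ 0) {δ : ℝ}
    (hδ : 0 < δ) : ∃ m₀, ∀ m ≥ m₀, ∀ S ∈ γ m, volume.real S.carrier < δ := by
  obtain ⟨c, hc₀, hc₁, hc⟩ := σ.exists_forall_beta_le
  have hβ (i j : Fin n) (k : Fin (σ.numSub i j)) : σ.beta i j k ^ d ≤ c :=
    (pow_le_of_le_one (σ.beta_pos i j k).le (σ.beta_lt_one i j k).le hd).trans (hc i j k)
  exact exists_forall_ge_forall_lt_of_contracting (h.isContractingStep hd hβ) hc₀ hc₁ hδ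

end IsMaxSubstitutionSeq

end Substitution

theorem tiles_diam_to_zero_general {d n : ℕ} (σ : MSScheme d n) (γ : ℕ → Finset (LTile d n))
    (hγ : IsMaxSubstitutionSeq σ γ) :
    ∀ ε > (0 : ℝ), ∃ m₀ : ℕ, ∀ m ≥ m₀, ∀ S ∈ γ m, Metric.diam S.carrier < ε := by
  intro ε hε
  obtain rfl | hd := eq_or_ne d 0
  · exact ⟨0, fun m _ S _ => by rwa [Metric.diam_subsingleton (Set.subsingleton_of_subsingleton)]⟩
  obtain ⟨C, hC₀, hC⟩ := σ.exists_diam_pow_le_mul_volume_real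
  obtain ⟨δ, hδ, hCδ⟩ := exists_pos_mul_lt (pow_pos hε d) C
  obtain ⟨m₀, hm₀⟩ := hγ.exists_forall_volume_real_lt hd hδ
  refine ⟨m₀, fun m hm S hS => lt_of_pow_lt_pow_left₀ d hε.le ?_⟩
  calc
    Metric.diam S.carrier ^ d ≤ C * volume.real S.carrier := hC S (hγ.isRescaledCopy m S hS)
    _ ≤ C * δ := mul_le_mul_of_nonneg_left (hm₀ m hm S hS).le hC₀
    _ < ε ^ d := hCδ

/-- **Lemma 3.4.** In any Kakutani or generation sequence of partitions generated by a
multiscale substitution scheme, for every `ε > 0` all tiles of all sufficiently late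
partitions have diameter less than `ε`. -/
theorem tiles_diam_to_zero {d n : ℕ} (σ : MSScheme d n) (i : Fin n)
    (γ : ℕ → Finset (LTile d n))
    (hγ : IsKakutaniSeq σ i γ ∨ IsGenSeq σ i γ) :
    ∀ ε > (0 : ℝ), ∃ m₀ : ℕ, ∀ m ≥ m₀, ∀ S ∈ γ m, Metric.diam S.carrier < ε :=
  tiles_diam_to_zero_general σ γ
    (hγ.elim IsKakutaniSeq.isMaxSubstitutionSeq IsGenSeq.isMaxSubstitutionSeq)
end

section
/- Let G be a finite directed weighted multigraph: a finite vertex set V, a finite edge set E with source and target maps s, t : E → V, and a length function ℓ : E → (0,∞); the length of a path (a finite nonempty sequence of composable edges) is the sum of the lengths of its edges, and a path is closed if its initial and terminal vertices coincide. Assume G is strongly connected: for every ordered pair of vertices there is a path from the first to the second. Then the following are equivalent: (i) there exist closed paths γ_1, γ_2 in G such that ℓ(γ_1)/ℓ(γ_2) is irrational; (ii) the set {ℓ(γ) : γ a closed path in G} is not uniformly discrete in ℝ, i.e. for every ρ > 0 there exist closed paths γ, γ′ with ℓ(γ) ≠ ℓ(γ′) and |ℓ(γ) − ℓ(γ′)|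 < ρ. -/
/-- `IsPathFrom s t u v m e` : the edges `e 0, …, e m` form a directed path from the
vertex `u` to the vertex `v` in the directed multigraph with source map `s` and target
map `t`: consecutive edges are composable, the first starts at `u` and the last ends
at `v`. (Every path is a nonempty sequence of edges.) -/
def IsPathFrom {V E : Type*} (s t : E → V) (u v : V) (m : ℕ) (e : Fin (m + 1) → E) :
    Prop :=
  s (e 0) = u ∧ t (e (Fin.last m)) = v ∧
    ∀ k : Fin m, t (e k.castSucc) = s (e k.succ)

/-- `IsClosedPathLength s t ℓ a` : some closed path in the graph has total length `a`,
the length of a path being the sum of the lengths of its edges. -/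
def IsClosedPathLength {V E : Type*} (s t : E → V) (ℓ : E → ℝ) (a : ℝ) : Prop :=
  ∃ (v : V) (m : ℕ) (e : Fin (m + 1) → E),
    IsPathFrom s t v v m e ∧ a = ∑ k : Fin (m + 1), ℓ (e k)

/-!
If `a` and `b` are closed path lengths with `a / b` irrational, then `a` and `b` generate a dense
subgroup of `ℝ`, so `i * a + j * b` takes arbitrarily small positive values for integers `i`, `j`.
A value smaller than both `a` and `b` forces `i` and `j` to have opposite signs, and then
`|i| * a` and `|j| * b` are distinct nearby lengths of iterated closed paths.

Conversely, all closed path lengths lie in the group generated by the finitely many edge lengths, so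
the group they generate is itself finitely generated. If all their ratios are rational, this group
lies in a rational line `ℚ b`, and a common denominator of its generators puts it into a
lattice `ℤ c`, which is uniformly discrete.
-/

open Submodule

theorem exists_le_span_singleton_of_fg {R K M : Type*} [CommRing R] [Field K] [Algebra R K]
    [IsFractionRing R K] [AddCommGroup M] [Module R M] [Module K M] [IsScalarTower R K M]
    {N : Submodule R M} (hN : N.FG) {b : M} (hNb : N ≤ (K ∙ b).restrictScalars R) :
    ∃ c, N ≤ R ∙ c := by
  obtain ⟨T, rfl⟩ := hN
  have hcoeff (x : T) : ∃ r : K, r • b = x := mem_span_singleton.mp (hNb (subset_span x.2))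
  choose r hr using hcoeff
  obtain ⟨d, hd⟩ := IsLocalization.exist_integer_multiples_of_finite (nonZeroDivisors R) r
  have hd0 : algebraMap R K d ≠ 0 := (IsLocalization.map_units K d).ne_zero
  refine ⟨(algebraMap R K d)⁻¹ • b, span_le.mpr fun x hx => mem_span_singleton.mpr ?_⟩
  obtain ⟨z, hz⟩ := hd ⟨x, hx⟩
  refine ⟨z, ?_⟩
  calc z • (algebraMap R K d)⁻¹ • b
      = (algebraMap R K d * r ⟨x, hx⟩) • (algebraMap R K d)⁻¹ • b := by
        rw [← algebraMap_smul K z, hz, Algebra.smul_def]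
    _ = r ⟨x, hx⟩ • b := by rw [smul_smul, mul_right_comm, mul_inv_cancel₀ hd0, one_mul]
    _ = x := hr ⟨x, hx⟩

theorem exists_subset_span_rat_singleton {S : Set ℝ}
    (hS : ∀ a ∈ S, ∀ b ∈ S, ¬ Irrational (a / b)) : ∃ b : ℝ, S ⊆ ℚ ∙ b := by
  by_cases! h : ∃ b ∈ S, b ≠ 0
  · obtain ⟨b, hb, hb0⟩ := h
    refine ⟨b, fun a ha => mem_span_singleton.mpr ?_⟩
    obtain ⟨r, hr⟩ := not_not.mp (hS a ha b hb)
    exact ⟨r, by rw [Rat.smul_def, hr, div_mul_cancel₀ a hb0]⟩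
  · exact ⟨0, fun a ha => by simp [h a ha]⟩

theorem abs_le_abs_of_mem_span_int_singleton {G : Type*} [AddCommGroup G] [LinearOrder G]
    [IsOrderedAddMonoid G] {c x : G} (hx : x ∈ ℤ ∙ c) (hx0 : x ≠ 0) : |c| ≤ |x| := by
  obtain ⟨z, rfl⟩ := mem_span_singleton.mp hx
  have hz : z.natAbs ≠ 0 := Int.natAbs_ne_zero.mpr (left_ne_zero_of_smul hx0)
  rw [abs_zsmul, Int.abs_eq_natAbs, natCast_zsmul]
  exact le_self_nsmul (abs_nonneg c) hz

theorem exists_pos_forall_le_abs_sub_of_fg_span_int {S : Set ℝ} (hfg : (span ℤ S).FG)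
    (hS : ∀ a ∈ S, ∀ b ∈ S, ¬ Irrational (a / b)) :
    ∃ ρ > 0, ∀ a ∈ S, ∀ b ∈ S, a ≠ b → ρ ≤ |a - b| := by
  obtain ⟨b, hb⟩ := exists_subset_span_rat_singleton hS
  obtain ⟨c, hc⟩ := exists_le_span_singleton_of_fg (K := ℚ) hfg (span_le.mpr hb)
  have hsub {x y : ℝ} (hx : x ∈ S) (hy : y ∈ S) : x - y ∈ ℤ ∙ c :=
    sub_mem (hc (subset_span hx)) (hc (subset_span hy))
  rcases eq_or_ne c 0 with rfl | hc0
  · refine ⟨1, one_pos, fun x hx y hy hne => absurd ?_ hne⟩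
    simpa [sub_eq_zero] using hsub hx hy
  · exact ⟨|c|, abs_pos.mpr hc0, fun x hx y hy hne =>
      abs_le_abs_of_mem_span_int_singleton (hsub hx hy) (sub_ne_zero.mpr hne)⟩

theorem int_mul_neg_of_mul_add_mul_lt {R : Type*} [CommRing R] [LinearOrder R]
    [IsStrictOrderedRing R] {a b : R} {i j : ℤ} (hpos : 0 < i * a + j * b)
    (hlta : i * a + j * b < a) (hltb : i * a + j * b < b) : i * j < 0 := by
  have ha : 0 < a := hpos.trans hlta
  have hb : 0 < b := hpos.trans hltb
  by_contra! hij
  obtain ⟨hi, hj⟩ : i ≤ 0 ∧ j ≤ 0 := by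
    rcases mul_nonneg_iff.mp hij with ⟨hi, hj⟩ | h
    · have hia : 0 ≤ i * a := mul_nonneg (mod_cast hi) ha.le
      have hjb : 0 ≤ j * b := mul_nonneg (mod_cast hj) hb.le
      constructor
      · by_contra! hi
        have : a ≤ i * a := le_mul_of_one_le_left ha.le (mod_cast hi)
        linarith
      · by_contra! hj
        have : b ≤ j * b := le_mul_of_one_le_left hb.le (mod_cast hj)
        linarith
    · exact h
  have hia : i * a ≤ 0 := mul_nonpos_of_nonpos_of_nonneg (mod_cast hi) ha.le
  have hjb : j * b ≤ 0 := mul_nonpos_of_nonpos_of_nonneg (mod_cast hj) hb.le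
  linarith

theorem exists_nat_abs_mul_sub_mul_lt_of_irrational_div {a b ρ : ℝ} (ha : 0 < a) (hb : 0 < b)
    (hab : Irrational (a / b)) (hρ : 0 < ρ) :
    ∃ k n : ℕ, k ≠ 0 ∧ n ≠ 0 ∧ k * a ≠ n * b ∧ |k * a - n * b| < ρ := by
  obtain ⟨x, hx, hx0, hxlt⟩ := (dense_addSubgroupClosure_pair_iff.mpr hab).exists_between
    (lt_min hρ (lt_min ha hb))
  obtain ⟨hxρ, hxa, hxb⟩ : x < ρ ∧ x < a ∧ x < b := by simpa only [lt_min_iff] using hxlt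
  obtain ⟨i, j, rfl⟩ := AddSubgroup.mem_closure_pair.mp hx
  simp only [zsmul_eq_mul] at hx0 hxρ hxa hxb
  have hij : i * j < 0 := int_mul_neg_of_mul_add_mul_lt hx0 hxa hxb
  have habs : |i.natAbs * a - j.natAbs * b| = i * a + j * b := by
    rcases mul_neg_iff.mp hij with ⟨hi, hj⟩ | ⟨hi, hj⟩
    · rw [Nat.cast_natAbs, Nat.cast_natAbs, abs_of_pos hi, abs_of_neg hj, Int.cast_neg, neg_mul,
        sub_neg_eq_add, abs_of_pos hx0]
    · rw [Nat.cast_natAbs, Nat.cast_natAbs, abs_of_neg hi, abs_of_pos hj, Int.cast_neg, neg_mul,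
        ← neg_add', abs_neg, abs_of_pos hx0]
  refine ⟨i.natAbs, j.natAbs, Int.natAbs_ne_zero.mpr (left_ne_zero_of_mul hij.ne),
    Int.natAbs_ne_zero.mpr (right_ne_zero_of_mul hij.ne), ?_, habs.trans_lt hxρ⟩
  rw [← sub_ne_zero, ← abs_pos, habs]
  exact hx0

section Path

variable {V E : Type*} {s t : E → V}

theorem IsPathFrom.append {u v w : V} {m n : ℕ} {e : Fin (m + 1) → E} {e' : Fin (n + 1) → E}
    (h : IsPathFrom s t u v m e) (h' : IsPathFrom s t v w n e') :
    IsPathFrom s t u w (m + 1 + n) (Fin.append e e' : Fin (m + 1 + (n + 1)) → E) := by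
  obtain ⟨hu, hv, hcomp⟩ := h
  obtain ⟨hv', hw, hcomp'⟩ := h'
  have hleft (i : Fin (m + 1)) : Fin.append e e' (i.castAdd (n + 1)) = e i :=
    Fin.append_left e e' i
  have hright (j : Fin (n + 1)) : Fin.append e e' (j.natAdd (m + 1)) = e' j :=
    Fin.append_right e e' j
  refine ⟨(congrArg s (hleft 0)).trans hu, (congrArg t (hright (Fin.last n))).trans hw, fun k => ?_⟩
  cases k using Fin.addCases with
  | left i =>
    cases i using Fin.lastCases with
    | last =>
      calc t (Fin.append e e' ((Fin.last m).castAdd (n + 1))) = v := by rw [hleft, hv]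
        _ = s (Fin.append e e' ((0 : Fin (n + 1)).natAdd (m + 1))) := by rw [hright, hv']
    | cast i =>
      calc t (Fin.append e e' (i.castSucc.castAdd (n + 1))) = s (e i.succ) := by rw [hleft, hcomp]
        _ = s (Fin.append e e' (i.succ.castAdd (n + 1))) := by rw [hleft]
  | right j =>
    calc t (Fin.append e e' (j.castSucc.natAdd (m + 1))) = s (e' j.succ) := by rw [hright, hcomp']
      _ = s (Fin.append e e' (j.succ.natAdd (m + 1))) := by rw [hright]

theorem IsPathFrom.exists_sum_eq_nsmul {A : Type*} [AddCommMonoid A] {v : V} {m : ℕ}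
    {e : Fin (m + 1) → E} (h : IsPathFrom s t v v m e) (ℓ : E → A) {k : ℕ} (hk : k ≠ 0) :
    ∃ (m' : ℕ) (e' : Fin (m' + 1) → E),
      IsPathFrom s t v v m' e' ∧ ∑ i, ℓ (e' i) = k • ∑ i, ℓ (e i) := by
  induction k, Nat.one_le_iff_ne_zero.mpr hk using Nat.le_induction with
  | base => exact ⟨m, e, h, (one_nsmul _).symm⟩
  | succ k hk1 ih =>
    obtain ⟨m', e', h', hsum⟩ := ih (Nat.one_le_iff_ne_zero.mp hk1)
    refine ⟨m' + 1 + m, (Fin.append e' e : Fin (m' + 1 + (m + 1)) → E), h'.append h, ?_⟩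
    rw [succ_nsmul, ← hsum]
    simpa only [Fin.append_left, Fin.append_right] using!
      Fin.sum_univ_add fun i : Fin (m' + 1 + (m + 1)) => ℓ (Fin.append e' e i)

namespace IsClosedPathLength

variable {ℓ : E → ℝ} {a : ℝ}

theorem natCast_mul (h : IsClosedPathLength s t ℓ a) {k : ℕ} (hk : k ≠ 0) :
    IsClosedPathLength s t ℓ (k * a) := by
  obtain ⟨v, m, e, he, rfl⟩ := h
  obtain ⟨m', e', he', hsum⟩ := he.exists_sum_eq_nsmul ℓ hk
  exact ⟨v, m', e', he', by rw [hsum, nsmul_eq_mul]⟩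

theorem nonneg (h : IsClosedPathLength s t ℓ a) (hℓ : ∀ e, 0 ≤ ℓ e) : 0 ≤ a := by
  obtain ⟨-, -, e, -, rfl⟩ := h
  exact Finset.sum_nonneg fun k _ => hℓ (e k)

theorem mem_span_range (h : IsClosedPathLength s t ℓ a) : a ∈ span ℤ (Set.range ℓ) := by
  obtain ⟨-, -, e, -, rfl⟩ := h
  exact sum_mem fun k _ => subset_span (Set.mem_range_self (e k))

end IsClosedPathLength

end Path

theorem incommensurable_iff_not_uniformly_discrete_general {V E : Type*} {s t : E → V} {ℓ : E → ℝ}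
    (hℓ : ∀ e, 0 ≤ ℓ e) (hfg : (span ℤ (Set.range ℓ)).FG) :
    (∃ a b : ℝ, IsClosedPathLength s t ℓ a ∧ IsClosedPathLength s t ℓ b ∧
      Irrational (a / b)) ↔
    (∀ ρ > (0 : ℝ), ∃ a b : ℝ, IsClosedPathLength s t ℓ a ∧
      IsClosedPathLength s t ℓ b ∧ a ≠ b ∧ |a - b| < ρ) := by
  constructor
  · rintro ⟨a, b, ha, hb, hirr⟩ ρ hρ
    obtain ⟨ha0, hb0⟩ : a ≠ 0 ∧ b ≠ 0 := div_ne_zero_iff.mp hirr.ne_zero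
    obtain ⟨k, n, hk, hn, hne, hlt⟩ := exists_nat_abs_mul_sub_mul_lt_of_irrational_div
      ((ha.nonneg hℓ).lt_of_ne' ha0) ((hb.nonneg hℓ).lt_of_ne' hb0) hirr hρ
    exact ⟨k * a, n * b, ha.natCast_mul hk, hb.natCast_mul hn, hne, hlt⟩
  · intro hclose
    by_contra! hrat
    have hfg' : (span ℤ {a | IsClosedPathLength s t ℓ a}).FG :=
      hfg.of_le (span_le.mpr fun _ ha => ha.mem_span_range)
    obtain ⟨ρ, hρ, hsep⟩ := exists_pos_forall_le_abs_sub_of_fg_span_int hfg'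
      fun a ha b hb => hrat a b ha hb
    obtain ⟨a, b, ha, hb, hne, hlt⟩ := hclose ρ hρ
    exact (hsep a ha b hb hne).not_gt hlt

/-- **Lemma 4.15.** Let `G` be a finite strongly connected directed multigraph with
positive edge lengths. Then `G` is incommensurable (there are two closed paths whose
lengths have irrational ratio) if and only if the set of lengths of closed paths of
`G` is not uniformly discrete in `ℝ`. -/
theorem incommensurable_iff_not_uniformly_discrete
    {V E : Type*} [Fintype V] [Fintype E] (s t : E → V) (ℓ : E → ℝ)
    (hpos : ∀ e, 0 < ℓ e)
    (hconn : ∀ u v : V, ∃ (m : ℕ) (e : Fin (m + 1) → E), IsPathFrom s t u v m e) :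
    (∃ a b : ℝ, IsClosedPathLength s t ℓ a ∧ IsClosedPathLength s t ℓ b ∧
      Irrational (a / b)) ↔
    (∀ ρ > (0 : ℝ), ∃ a b : ℝ, IsClosedPathLength s t ℓ a ∧
      IsClosedPathLength s t ℓ b ∧ a ≠ b ∧ |a - b| < ρ) :=
  incommensurable_iff_not_uniformly_discrete_general (fun e => (hpos e).le)
    (fg_span (Set.finite_range ℓ))
end
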